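/- arXiv:1309.6013 — 2 statements merged into one kernel-verified Lean document; each statement's English description precedes it below -/
import Mathlib

section
/- Let M ∈ ℝ^{d1×d2}, α > 0 and r a positive integer. If rank(M) ≤ r and ‖M‖_∞ ≤ α, then ‖M‖_max ≤ α √r and ‖M‖_* ≤ α √r · √(d1 d2); that is, M belongs to K_max(α, α√r) and K_max(α, α√r) ⊆ K_*(α, r). -/
open scoped BigOperators
open Matrix

/-- The elementwise `ℓ∞`-norm of a matrix: `max_{k,l} |M_{k,l}|`. -/
noncomputable def linfNorm {d1 d2 : ℕ} (M : Matrix (Fin d1) (Fin d2) ℝ) : ℝ :=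
  ⨆ k, ⨆ l, |M k l|

/-- The trace-norm (nuclear norm) of a real matrix: the sum of its singular values,
i.e. the square roots of the eigenvalues of `M * Mᵀ`. -/
noncomputable def traceNorm {d1 d2 : ℕ} (M : Matrix (Fin d1) (Fin d2) ℝ) : ℝ :=
  ∑ i, Real.sqrt ((Matrix.isHermitian_mul_conjTranspose_self M).eigenvalues i)

/-- The largest `ℓ₂`-norm of a row of a matrix (the `(2,∞)` operator norm). -/
noncomputable def rowMaxNorm {n k : ℕ} (U : Matrix (Fin n) (Fin k) ℝ) : ℝ :=
  ⨆ i, Real.sqrt (∑ j, (U i j) ^ 2)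

/-- The max-norm of a real matrix: the infimum of `‖U‖_{2,∞} ‖V‖_{2,∞}` over all
factorizations `M = U * Vᵀ`. -/
noncomputable def maxNorm {d1 d2 : ℕ} (M : Matrix (Fin d1) (Fin d2) ℝ) : ℝ :=
  sInf { c : ℝ | ∃ (k : ℕ) (U : Matrix (Fin d1) (Fin k) ℝ) (V : Matrix (Fin d2) (Fin k) ℝ),
    0 < k ∧ M = U * Vᵀ ∧ c = rowMaxNorm U * rowMaxNorm V }

/-!
For `‖M‖_max ≤ √(rank M) ‖M‖_∞`, take a full-rank factorization `M = U Vᵀ` and a probability vector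
`p` on the rows of `U` maximizing the determinant of `G = ∑ i, p i • U i (U i)ᵀ`.  First-order
optimality of `p` gives `(U i)ᵀ G⁻¹ (U i) ≤ rank M` (Kiefer-Wolfowitz), while `(V l)ᵀ G (V l)` is
the `p`-average of the squares of the entries of a column of `M`.  With `G = Cᵀ C`, the
factorization `M = (U C⁻¹) (V Cᵀ)ᵀ` therefore has the required row norms.

For `‖M‖_* ≤ √(d1 d2) ‖M‖_max`, write the trace norm as `∑ i, ⟨e i, M (f i)⟩` over orthonormal
systems of singular vectors.  Cauchy-Schwarz and Bessel bound it by the product of the Frobenius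
norms of the factors of `M = U Vᵀ`, which are at most `√d1 ‖U‖_{2,∞}` and `√d2 ‖V‖_{2,∞}`.
-/

section MatrixNorms

lemma rowMaxNorm_nonneg {n k : ℕ} (U : Matrix (Fin n) (Fin k) ℝ) : 0 ≤ rowMaxNorm U :=
  Real.iSup_nonneg fun _ => Real.sqrt_nonneg _

@[simp]
lemma rowMaxNorm_zero (n k : ℕ) : rowMaxNorm (0 : Matrix (Fin n) (Fin k) ℝ) = 0 := by
  simp [rowMaxNorm]

lemma rowMaxNorm_le {n k : ℕ} {U : Matrix (Fin n) (Fin k) ℝ} {a : ℝ} (ha : 0 ≤ a)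
    (h : ∀ i, U i ⬝ᵥ U i ≤ a ^ 2) : rowMaxNorm U ≤ a :=
  Real.iSup_le (fun i => Real.sqrt_le_iff.2 ⟨ha, by simpa [dotProduct, sq] using h i⟩) ha

lemma sum_sq_row_le_rowMaxNorm_sq {n k : ℕ} (U : Matrix (Fin n) (Fin k) ℝ) (i : Fin n) :
    ∑ j, U i j ^ 2 ≤ rowMaxNorm U ^ 2 :=
  (Real.sqrt_le_iff.1 (le_ciSup (f := fun i => √(∑ j, U i j ^ 2))
    (Set.finite_range _).bddAbove i)).2

lemma linfNorm_nonneg {d1 d2 : ℕ} (M : Matrix (Fin d1) (Fin d2) ℝ) : 0 ≤ linfNorm M :=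
  Real.iSup_nonneg fun _ => Real.iSup_nonneg fun _ => abs_nonneg _

lemma abs_apply_le_linfNorm {d1 d2 : ℕ} (M : Matrix (Fin d1) (Fin d2) ℝ) (i : Fin d1)
    (j : Fin d2) : |M i j| ≤ linfNorm M :=
  (le_ciSup (f := fun j => |M i j|) (Set.finite_range _).bddAbove j).trans
    (le_ciSup (f := fun i => ⨆ j, |M i j|) (Set.finite_range _).bddAbove i)

-- A factorization through dimension `0` forces `M = 0`, which also factors through dimension `1`.
lemma isGLB_maxNorm {d1 d2 : ℕ} (M : Matrix (Fin d1) (Fin d2) ℝ) :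
    IsGLB { c : ℝ | ∃ (k : ℕ) (U : Matrix (Fin d1) (Fin k) ℝ) (V : Matrix (Fin d2) (Fin k) ℝ),
      M = U * Vᵀ ∧ c = rowMaxNorm U * rowMaxNorm V } (maxNorm M) := by
  set S := { c : ℝ | ∃ (k : ℕ) (U : Matrix (Fin d1) (Fin k) ℝ) (V : Matrix (Fin d2) (Fin k) ℝ),
    M = U * Vᵀ ∧ c = rowMaxNorm U * rowMaxNorm V }
  have hmax : maxNorm M = sInf S := by
    refine congrArg sInf (Set.ext fun c => ⟨?_, ?_⟩)
    · rintro ⟨k, U, V, -, h⟩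
      exact ⟨k, U, V, h⟩
    · rintro ⟨k, U, V, rfl, rfl⟩
      rcases k.eq_zero_or_pos with rfl | hk
      · exact ⟨1, 0, 0, one_pos, by simp [Subsingleton.elim U 0], by simp [Subsingleton.elim U 0]⟩
      · exact ⟨k, U, V, hk, rfl, rfl⟩
  rw [hmax]
  refine isGLB_csInf ⟨_, d1, 1, Mᵀ, by simp, rfl⟩ ⟨0, ?_⟩
  rintro _ ⟨k, U, V, -, rfl⟩
  exact mul_nonneg (rowMaxNorm_nonneg U) (rowMaxNorm_nonneg V)

lemma maxNorm_mul_transpose_le {d1 d2 k : ℕ} (U : Matrix (Fin d1) (Fin k) ℝ)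
    (V : Matrix (Fin d2) (Fin k) ℝ) : maxNorm (U * Vᵀ) ≤ rowMaxNorm U * rowMaxNorm V :=
  (isGLB_maxNorm _).1 ⟨k, U, V, rfl, rfl⟩

end MatrixNorms

section OptimalDesign

variable {m n R : Type*} [Fintype m] [DecidableEq m]

/-- The Gram matrix `∑ i, p i • U i (U i)ᵀ` of the rows of `U` with weights `p` (the information
matrix of the design `p` in optimal design theory). -/
def weightedGram [CommSemiring R] (U : Matrix m n R) (p : m → R) : Matrix n n R :=
  Uᵀ * diagonal p * U

lemma weightedGram_add [CommSemiring R] (U : Matrix m n R) (p q : m → R) :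
    weightedGram U (p + q) = weightedGram U p + weightedGram U q := by
  simp only [weightedGram, ← Matrix.add_mul, ← Matrix.mul_add, diagonal_add, Pi.add_def]

lemma weightedGram_smul [CommSemiring R] (U : Matrix m n R) (c : R) (p : m → R) :
    weightedGram U (c • p) = c • weightedGram U p := by
  simp [weightedGram, diagonal_smul]

lemma weightedGram_single [CommSemiring R] (U : Matrix m n R) (i : m) :
    weightedGram U (Pi.single i 1) = vecMulVec (U i) (U i) := by
  ext a b
  simp [weightedGram, Matrix.mul_apply, vecMulVec_apply, diagonal_apply, Pi.single_apply]

lemma posSemidef_weightedGram [Finite n] (U : Matrix m n ℝ) {p : m → ℝ} (hp : 0 ≤ p) :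
    (weightedGram U p).PosSemidef := by
  cases nonempty_fintype n
  exact (PosSemidef.diagonal hp).conjTranspose_mul_mul_same U

lemma posDef_weightedGram [Fintype n] {U : Matrix m n ℝ} (hU : Function.Injective U.mulVec)
    {p : m → ℝ} (hp : ∀ i, 0 < p i) : (weightedGram U p).PosDef :=
  (PosDef.diagonal hp).conjTranspose_mul_mul_same hU

lemma dotProduct_weightedGram_mulVec [CommSemiring R] [Fintype n] (U : Matrix m n R) (p : m → R)
    (x : n → R) :
    x ⬝ᵥ weightedGram U p *ᵥ x = ∑ i, p i * (U *ᵥ x) i ^ 2 := by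
  rw [weightedGram, ← mulVec_mulVec, ← mulVec_mulVec, dotProduct_mulVec, vecMul_transpose]
  simp only [dotProduct, mulVec_diagonal]
  exact Finset.sum_congr rfl fun _ _ => by ring

lemma det_add_smul_vecMulVec [CommRing R] [Fintype n] [DecidableEq n] {A : Matrix n n R}
    (hA : IsUnit A.det) (c : R) (u v : n → R) :
    (A + c • vecMulVec u v).det = A.det * (1 + c * (v ⬝ᵥ A⁻¹ *ᵥ u)) := by
  rw [← smul_vecMulVec, vecMulVec_eq Unit, det_add_replicateCol_mul_replicateRow hA,
    det_unique (n := Unit), ← replicateRow_vecMul, dotProduct_mulVec]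
  simp [replicateRow_mul_replicateCol_apply, smul_eq_mul]

lemma le_natCast_of_one_add_mul_le_one_add_pow {g : ℝ} {k : ℕ}
    (h : ∀ s : ℝ, 0 < s → 1 + s * g ≤ (1 + s) ^ k) : g ≤ k := by
  have hderiv : HasDerivAt (fun s : ℝ => (1 + s) ^ k) k 0 := by
    simpa using ((hasDerivAt_id (0 : ℝ)).const_add 1).fun_pow k
  refine ge_of_tendsto hderiv.tendsto_slope_zero_right ?_
  filter_upwards [self_mem_nhdsWithin] with s hs
  have hs : 0 < s := hs
  rw [smul_eq_mul, ← div_eq_inv_mul, le_div_iff₀ hs]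
  have := h s hs
  simp only [zero_add, add_zero, one_pow]
  linarith

lemma exists_isMaxOn_det_weightedGram [Nonempty m] [Fintype n] [DecidableEq n]
    {U : Matrix m n ℝ} (hU : Function.Injective U.mulVec) :
    ∃ p ∈ stdSimplex ℝ m, 0 < (weightedGram U p).det ∧
      IsMaxOn (fun q => (weightedGram U q).det) (stdSimplex ℝ m) p := by
  have hcont : Continuous fun p => (weightedGram U p).det := by
    unfold weightedGram
    fun_prop
  have huniform : (fun _ => (Fintype.card m : ℝ)⁻¹) ∈ stdSimplex ℝ m :=
    ⟨fun _ => by positivity, by simp⟩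
  obtain ⟨p, hp, hmax⟩ :=
    (isCompact_stdSimplex ℝ m).exists_isMaxOn ⟨_, huniform⟩ hcont.continuousOn
  have hpos := (posDef_weightedGram hU (p := fun _ => (Fintype.card m : ℝ)⁻¹)
    fun _ => by positivity).det_pos
  exact ⟨p, hp, hpos.trans_le (hmax huniform), hmax⟩

-- First-order optimality, tested along the segment from `p` to each vertex of the simplex.
lemma dotProduct_inv_weightedGram_mulVec_le_card [Fintype n] [DecidableEq n]
    {U : Matrix m n ℝ} {p : m → ℝ} (hp : p ∈ stdSimplex ℝ m) (hdet : 0 < (weightedGram U p).det)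
    (hmax : IsMaxOn (fun q => (weightedGram U q).det) (stdSimplex ℝ m) p) (i : m) :
    U i ⬝ᵥ (weightedGram U p)⁻¹ *ᵥ U i ≤ Fintype.card n := by
  refine le_natCast_of_one_add_mul_le_one_add_pow fun s hs => ?_
  have hmem : (1 + s)⁻¹ • (p + s • Pi.single i 1) ∈ stdSimplex ℝ m := by
    rw [smul_add, smul_smul]
    exact convex_stdSimplex ℝ m hp (single_mem_stdSimplex ℝ i) (by positivity) (by positivity)
      (by field_simp)
  have hle := hmax hmem
  simp only [Set.mem_ofPred_eq, weightedGram_smul, weightedGram_add, weightedGram_single, det_smul,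
    det_add_smul_vecMulVec hdet.ne'.isUnit, inv_pow] at hle
  rw [inv_mul_le_iff₀ (by positivity), mul_comm] at hle
  exact le_of_mul_le_mul_right hle hdet

theorem exists_mem_stdSimplex_dotProduct_inv_weightedGram_le [Nonempty m] [Fintype n]
    [DecidableEq n] {U : Matrix m n ℝ} (hU : Function.Injective U.mulVec) :
    ∃ p ∈ stdSimplex ℝ m, IsUnit (weightedGram U p).det ∧
      ∀ i, U i ⬝ᵥ (weightedGram U p)⁻¹ *ᵥ U i ≤ Fintype.card n := by
  obtain ⟨p, hp, hdet, hmax⟩ := exists_isMaxOn_det_weightedGram hU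
  exact ⟨p, hp, hdet.ne'.isUnit, dotProduct_inv_weightedGram_mulVec_le_card hp hdet hmax⟩

end OptimalDesign

section Factorization

variable {l m n : Type*} [Fintype n]

lemma exists_eq_mul_transpose_rank {K : Type*} [Field K] (M : Matrix m n K) :
    ∃ (U : Matrix m (Fin M.rank) K) (V : Matrix n (Fin M.rank) K),
      Function.Injective U.mulVec ∧ M = U * Vᵀ := by
  classical
  let b : Module.Basis (Fin M.rank) K (LinearMap.range M.mulVecLin) :=
    Module.finBasisOfFinrankEq K _ rfl
  let column (j : n) : LinearMap.range M.mulVecLin := ⟨M.col j, Pi.single j 1, by simp⟩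
  refine ⟨of fun i k => (b k : m → K) i, of fun j k => b.repr (column j) k, ?_, ?_⟩
  · rw [mulVec_injective_iff]
    exact b.linearIndependent.map' (Submodule.subtype _) (Submodule.ker_subtype _)
  · ext i j
    calc M i j = (column j : m → K) i := rfl
      _ = ((∑ k, b.repr (column j) k • b k : LinearMap.range M.mulVecLin) : m → K) i := by
        rw [b.sum_repr]
      _ = ∑ k, (b k : m → K) i * b.repr (column j) k := by
        simp only [Submodule.coe_sum, Submodule.coe_smul, Finset.sum_apply, Pi.smul_apply,
          smul_eq_mul, mul_comm]

lemma mul_row_dotProduct_self {R : Type*} [CommSemiring R] [Fintype m] (W : Matrix l m R)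
    (B : Matrix m n R) (i : l) : (W * B) i ⬝ᵥ (W * B) i = W i ⬝ᵥ (B * Bᵀ) *ᵥ W i := by
  rw [mul_apply_eq_vecMul, ← mulVec_mulVec, dotProduct_mulVec, mulVec_transpose]

open scoped MatrixOrder in
lemma exists_eq_transpose_mul_self_of_posSemidef {A : Matrix n n ℝ} (hA : A.PosSemidef) :
    ∃ C : Matrix n n ℝ, A = Cᵀ * C := by
  classical
  exact CStarAlgebra.nonneg_iff_eq_star_mul_self.1 hA.nonneg

lemma exists_mul_transpose_eq_and_rows_le [Finite m] [Nonempty m] {U : Matrix m n ℝ}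
    {V : Matrix l n ℝ} (hU : Function.Injective U.mulVec) {α : ℝ} (hα : ∀ i j, |(U * Vᵀ) i j| ≤ α) :
    ∃ (U' : Matrix m n ℝ) (V' : Matrix l n ℝ), U' * V'ᵀ = U * Vᵀ ∧
      (∀ i, U' i ⬝ᵥ U' i ≤ Fintype.card n) ∧ ∀ j, V' j ⬝ᵥ V' j ≤ α ^ 2 := by
  classical
  cases nonempty_fintype m
  obtain ⟨p, ⟨hp₀, hp₁⟩, hdet, hle⟩ := exists_mem_stdSimplex_dotProduct_inv_weightedGram_le hU
  obtain ⟨C, hC⟩ := exists_eq_transpose_mul_self_of_posSemidef (posSemidef_weightedGram U hp₀)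
  have hCdet : IsUnit C.det := by
    rw [hC, det_mul] at hdet
    exact isUnit_of_mul_isUnit_right hdet
  refine ⟨U * C⁻¹, V * Cᵀ, ?_, fun i => ?_, fun j => ?_⟩
  · rw [transpose_mul, transpose_transpose, Matrix.mul_assoc, nonsing_inv_mul_cancel_left _ _ hCdet]
  · rw [mul_row_dotProduct_self, transpose_nonsing_inv, ← Matrix.mul_inv_rev, ← hC]
    exact hle i
  · rw [mul_row_dotProduct_self, transpose_transpose, ← hC, dotProduct_weightedGram_mulVec]
    calc ∑ i, p i * (U *ᵥ V j) i ^ 2 ≤ ∑ i, p i * α ^ 2 := by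
          refine Finset.sum_le_sum fun i _ => mul_le_mul_of_nonneg_left ?_ (hp₀ i)
          exact sq_le_sq.2 ((hα i j).trans (le_abs_self α))
      _ = α ^ 2 := by rw [← Finset.sum_mul, hp₁, one_mul]

theorem maxNorm_le_linfNorm_mul_sqrt_rank {d1 d2 : ℕ} (M : Matrix (Fin d1) (Fin d2) ℝ) :
    maxNorm M ≤ linfNorm M * √M.rank := by
  obtain ⟨U, V, hU, hM⟩ := exists_eq_mul_transpose_rank M
  cases isEmpty_or_nonempty (Fin d1)
  · have hzero : maxNorm M ≤ 0 := by
      simpa [Subsingleton.elim M 0] using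
        maxNorm_mul_transpose_le (0 : Matrix (Fin d1) (Fin 0) ℝ) (0 : Matrix (Fin d2) (Fin 0) ℝ)
    exact hzero.trans (mul_nonneg (linfNorm_nonneg M) (Real.sqrt_nonneg _))
  obtain ⟨U', V', hUV, hU', hV'⟩ := exists_mul_transpose_eq_and_rows_le hU (V := V)
    (α := linfNorm M) (hM ▸ abs_apply_le_linfNorm M)
  calc maxNorm M = maxNorm (U' * V'ᵀ) := by rw [hUV, ← hM]
    _ ≤ rowMaxNorm U' * rowMaxNorm V' := maxNorm_mul_transpose_le U' V'
    _ ≤ √M.rank * linfNorm M := by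
      gcongr
      · exact rowMaxNorm_nonneg V'
      · exact rowMaxNorm_le (Real.sqrt_nonneg _) (by simpa using hU')
      · exact rowMaxNorm_le (linfNorm_nonneg M) hV'
    _ = linfNorm M * √M.rank := mul_comm _ _

end Factorization

section SingularVectors

variable {m n : Type*} [Fintype m] [DecidableEq m] [Fintype n] (N : Matrix m n ℝ)

/-- The singular values of `N`, indexed by the rows of `N` and hence padded with zeros when `N` has
more rows than columns. -/
noncomputable def singularValue (i : m) : ℝ :=
  √((isHermitian_mul_conjTranspose_self N).eigenvalues i)

/-- An orthonormal basis of left singular vectors of `N`: eigenvectors of `N * Nᵀ`. -/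
noncomputable def leftSingularVector : OrthonormalBasis m ℝ (EuclideanSpace ℝ m) :=
  (isHermitian_mul_conjTranspose_self N).eigenvectorBasis

/-- The right singular vector of `N` matching `leftSingularVector N i`; it is `0` when the singular
value vanishes. -/
noncomputable def rightSingularVector (i : m) : EuclideanSpace ℝ n :=
  WithLp.toLp 2 ((singularValue N i)⁻¹ • Nᵀ *ᵥ leftSingularVector N i)

lemma traceNorm_eq_sum_singularValue {d1 d2 : ℕ} (N : Matrix (Fin d1) (Fin d2) ℝ) :
    traceNorm N = ∑ i, singularValue N i := rfl

lemma singularValue_sq (i : m) :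
    singularValue N i ^ 2 = (isHermitian_mul_conjTranspose_self N).eigenvalues i :=
  Real.sq_sqrt (eigenvalues_self_mul_conjTranspose_nonneg N i)

lemma mul_transpose_mulVec_leftSingularVector (i : m) :
    (N * Nᵀ) *ᵥ leftSingularVector N i = singularValue N i ^ 2 • ⇑(leftSingularVector N i) := by
  rw [singularValue_sq]
  exact (isHermitian_mul_conjTranspose_self N).mulVec_eigenvectorBasis i

lemma dotProduct_transpose_mulVec_leftSingularVector (i j : m) :
    (Nᵀ *ᵥ leftSingularVector N i) ⬝ᵥ (Nᵀ *ᵥ leftSingularVector N j) =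
      if i = j then singularValue N i ^ 2 else 0 := by
  have horth := orthonormal_iff_ite.1 (leftSingularVector N).orthonormal j i
  rw [EuclideanSpace.inner_eq_star_dotProduct, star_trivial] at horth
  rw [mulVec_transpose, ← dotProduct_mulVec, mulVec_mulVec,
    mul_transpose_mulVec_leftSingularVector, dotProduct_smul, horth]
  by_cases h : i = j <;> simp [h, Ne.symm]

lemma orthonormal_rightSingularVector :
    Orthonormal ℝ fun i : {i // singularValue N i ≠ 0} => rightSingularVector N i := by
  rw [orthonormal_iff_ite]
  rintro ⟨i, hi⟩ ⟨j, hj⟩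
  rw [EuclideanSpace.inner_eq_star_dotProduct, star_trivial]
  simp only [rightSingularVector, smul_dotProduct, dotProduct_smul,
    dotProduct_transpose_mulVec_leftSingularVector, Subtype.mk.injEq, eq_comm (a := j)]
  split_ifs with h
  · subst h
    simp only [smul_eq_mul]
    field_simp
  · simp

lemma dotProduct_mulVec_rightSingularVector (i : m) :
    leftSingularVector N i ⬝ᵥ N *ᵥ rightSingularVector N i = singularValue N i := by
  rw [dotProduct_mulVec, ← mulVec_transpose, rightSingularVector, dotProduct_smul,
    dotProduct_transpose_mulVec_leftSingularVector, if_pos rfl, smul_eq_mul, sq,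
    ← mul_assoc, inv_mul_mul_self]

end SingularVectors

section FrobeniusNorm

open scoped Matrix.Norms.Frobenius

variable {ι m n k : Type*} [Fintype ι] [Fintype m] [Fintype n] [Fintype k]

lemma frobenius_norm_sq (A : Matrix m n ℝ) : ‖A‖ ^ 2 = ∑ i, ∑ j, A i j ^ 2 := by
  rw [frobenius_norm_def, ← Real.sqrt_eq_rpow, Real.sq_sqrt (by positivity)]
  simp

lemma sum_norm_transpose_mulVec_sq_le {v : ι → EuclideanSpace ℝ m} (hv : Orthonormal ℝ v)
    (W : Matrix m k ℝ) : ∑ i, ‖WithLp.toLp 2 (Wᵀ *ᵥ v i)‖ ^ 2 ≤ ‖W‖ ^ 2 := by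
  have hinner (i : ι) (j : k) : (Wᵀ *ᵥ v i) j = inner ℝ (v i) (WithLp.toLp 2 (Wᵀ j)) := by
    rw [EuclideanSpace.inner_eq_star_dotProduct, star_trivial]
    rfl
  calc ∑ i, ‖WithLp.toLp 2 (Wᵀ *ᵥ v i)‖ ^ 2
      = ∑ j, ∑ i, ‖inner ℝ (v i) (WithLp.toLp 2 (Wᵀ j))‖ ^ 2 := by
        simp only [EuclideanSpace.norm_sq_eq, hinner]
        exact Finset.sum_comm
    _ ≤ ∑ j, ‖WithLp.toLp 2 (Wᵀ j)‖ ^ 2 :=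
        Finset.sum_le_sum fun j _ => hv.sum_inner_products_le _
    _ = ‖W‖ ^ 2 := by
        rw [← frobenius_norm_transpose, frobenius_norm_sq]
        simp [EuclideanSpace.norm_sq_eq]

lemma sum_dotProduct_mul_transpose_mulVec_le {u : ι → EuclideanSpace ℝ m}
    {v : ι → EuclideanSpace ℝ n} (hu : Orthonormal ℝ u) (hv : Orthonormal ℝ v)
    (U : Matrix m k ℝ) (V : Matrix n k ℝ) :
    ∑ i, u i ⬝ᵥ (U * Vᵀ) *ᵥ v i ≤ ‖U‖ * ‖V‖ := by
  have hCS (i : ι) : u i ⬝ᵥ (U * Vᵀ) *ᵥ v i ≤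
      ‖WithLp.toLp 2 (Uᵀ *ᵥ u i)‖ * ‖WithLp.toLp 2 (Vᵀ *ᵥ v i)‖ := by
    rw [← mulVec_mulVec, dotProduct_mulVec, ← mulVec_transpose, dotProduct_comm]
    simpa [EuclideanSpace.inner_eq_star_dotProduct] using
      real_inner_le_norm (WithLp.toLp 2 (Uᵀ *ᵥ u i)) (WithLp.toLp 2 (Vᵀ *ᵥ v i))
  refine (Finset.sum_le_sum fun i _ => hCS i).trans <|
    (Real.sum_mul_le_sqrt_mul_sqrt _ _ _).trans ?_
  gcongr
  · exact Real.sqrt_le_iff.2 ⟨norm_nonneg U, sum_norm_transpose_mulVec_sq_le hu U⟩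
  · exact Real.sqrt_le_iff.2 ⟨norm_nonneg V, sum_norm_transpose_mulVec_sq_le hv V⟩

lemma traceNorm_mul_transpose_le {d1 d2 : ℕ} (U : Matrix (Fin d1) k ℝ) (V : Matrix (Fin d2) k ℝ) :
    traceNorm (U * Vᵀ) ≤ ‖U‖ * ‖V‖ := by
  set N := U * Vᵀ
  have hleft : Orthonormal ℝ fun i : {i // singularValue N i ≠ 0} => leftSingularVector N i :=
    (leftSingularVector N).orthonormal.comp _ Subtype.val_injective
  calc traceNorm N = ∑ i : {i // singularValue N i ≠ 0}, singularValue N i := by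
        rw [traceNorm_eq_sum_singularValue, ← Finset.sum_filter_ne_zero,
          Finset.sum_subtype _ fun _ => by rw [Finset.mem_filter_univ]]
    _ = ∑ i : {i // singularValue N i ≠ 0},
          leftSingularVector N i ⬝ᵥ (U * Vᵀ) *ᵥ rightSingularVector N i :=
        Finset.sum_congr rfl fun i _ => (dotProduct_mulVec_rightSingularVector N i).symm
    _ ≤ ‖U‖ * ‖V‖ :=
        sum_dotProduct_mul_transpose_mulVec_le hleft (orthonormal_rightSingularVector N) U V

lemma frobenius_norm_le_sqrt_mul_rowMaxNorm {d r : ℕ} (U : Matrix (Fin d) (Fin r) ℝ) :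
    ‖U‖ ≤ √d * rowMaxNorm U := by
  refine le_of_sq_le_sq ?_ (mul_nonneg (Real.sqrt_nonneg _) (rowMaxNorm_nonneg U))
  calc ‖U‖ ^ 2 = ∑ i, ∑ j, U i j ^ 2 := frobenius_norm_sq U
    _ ≤ ∑ _ : Fin d, rowMaxNorm U ^ 2 :=
        Finset.sum_le_sum fun i _ => sum_sq_row_le_rowMaxNorm_sq U i
    _ = (√d * rowMaxNorm U) ^ 2 := by simp [mul_pow]

theorem traceNorm_le_maxNorm_mul_sqrt {d1 d2 : ℕ} (N : Matrix (Fin d1) (Fin d2) ℝ) :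
    traceNorm N ≤ maxNorm N * √(d1 * d2) := by
  refine ((isGLB_maxNorm N).mul_right (Real.sqrt_nonneg _)).2 ?_
  rintro _ ⟨_, ⟨k, U, V, rfl, rfl⟩, rfl⟩
  calc traceNorm (U * Vᵀ) ≤ ‖U‖ * ‖V‖ := traceNorm_mul_transpose_le U V
    _ ≤ (√d1 * rowMaxNorm U) * (√d2 * rowMaxNorm V) := by
      gcongr
      · exact mul_nonneg (Real.sqrt_nonneg _) (rowMaxNorm_nonneg U)
      · exact frobenius_norm_le_sqrt_mul_rowMaxNorm U
      · exact frobenius_norm_le_sqrt_mul_rowMaxNorm V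
    _ = rowMaxNorm U * rowMaxNorm V * √(d1 * d2) := by
      rw [Real.sqrt_mul (Nat.cast_nonneg d1)]
      ring

end FrobeniusNorm

/-- if `rank M ≤ r` and `‖M‖_∞ ≤ α`, then `‖M‖_max ≤ α √r` and
`‖M‖_* ≤ α √r · √(d1 d2)`; that is, `M ∈ K_max(α, α√r)` and
`K_max(α, α√r) ⊆ K_*(α, r)`. -/
theorem lowRank_mem_Kmax_and_Kmax_subset_Kstar {d1 d2 : ℕ}
    (M : Matrix (Fin d1) (Fin d2) ℝ) (α : ℝ) (r : ℕ) (hα : 0 < α) (hr : 0 < r)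
    (hrank : M.rank ≤ r) (hinf : linfNorm M ≤ α) :
    (maxNorm M ≤ α * Real.sqrt r ∧ traceNorm M ≤ α * Real.sqrt r * Real.sqrt (d1 * d2)) ∧
      { N : Matrix (Fin d1) (Fin d2) ℝ | linfNorm N ≤ α ∧ maxNorm N ≤ α * Real.sqrt r } ⊆
        { N : Matrix (Fin d1) (Fin d2) ℝ |
          linfNorm N ≤ α ∧ traceNorm N / Real.sqrt (d1 * d2) ≤ α * Real.sqrt r } := by
  have hmax : maxNorm M ≤ α * √r :=
    (maxNorm_le_linfNorm_mul_sqrt_rank M).trans (by gcongr)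
  have htrace {N : Matrix (Fin d1) (Fin d2) ℝ} (hN : maxNorm N ≤ α * √r) :
      traceNorm N ≤ α * √r * √(d1 * d2) :=
    (traceNorm_le_maxNorm_mul_sqrt N).trans (by gcongr)
  refine ⟨⟨hmax, htrace hmax⟩, fun N hN => ⟨hN.1, ?_⟩⟩
  exact div_le_of_le_mul₀ (Real.sqrt_nonneg _) (by positivity) (htrace hN.2)
end

section
/- There exists an absolute constant C > 0 with the following property. Let d1, d2 ≥ 1, d = d1 + d2, α, R > 0, and let F : ℝ → (0,1) be differentiable with F and F' nonzero on [−α, α] and with L_α, β_α, U_α finite (Condition U). Let M* ∈ K_max(α, R), let Π = (π_{kl}) be any probability distribution on [d1]×[d2], and let S = ((i₁,j₁), …, (iₙ,jₙ)) be drawn i.i.d. from Π with 2 < n ≤ d1 d2. Given S, let Y_{i_t,j_t} ∈ {−1, +1} be independent with P(Y_{i_t,j_t} = 1) = F(M*_{i_t,j_t}), and let M̂_max be any minimizer over K_max(α, R) of the negative log-likelihood ℓ_S(M; Y) = Σ_{t=1}^n [ 1{Y_{i_t,j_t}=1} log(1/F(M_{i_t,j_t})) + 1{Y_{i_t,j_t}=−1}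 log(1/(1−F(M_{i_t,j_t}))) ]. Then for any δ > 0, with probability at least 1 − δ, ‖M̂_max − M*‖_Π² = Σ_{k,l} π_{kl} (M̂_max − M*)_{k,l}² ≤ C β_α { L_α R √(d/n) + U_α √( log(4/δ)/n ) }. -/
open scoped BigOperators
open Matrix

/-- The negative log-likelihood `ℓ_S(M; Y)` of the matrix `M` for observed signs
`y : Fin n → Bool` (`y t = true` encodes `Y_{i_t,j_t} = +1`) at sampled index pairs `S`. -/
noncomputable def negLogLik {d1 d2 n : ℕ} (F : ℝ → ℝ)
    (S : Fin n → Fin d1 × Fin d2) (y : Fin n → Bool)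
    (M : Matrix (Fin d1) (Fin d2) ℝ) : ℝ :=
  ∑ t, if y t then Real.log (1 / F (M (S t).1 (S t).2))
    else Real.log (1 / (1 - F (M (S t).1 (S t).2)))

/-- The probability weight of the outcome `(S, y)` under i.i.d. sampling of the index pairs
from `Π` and, given `S`, independent signs with `P(Y_{i_t,j_t} = 1) = F(M*_{i_t,j_t})`. -/
noncomputable def sampleWeight {d1 d2 n : ℕ} (F : ℝ → ℝ) (π : Fin d1 → Fin d2 → ℝ)
    (Mstar : Matrix (Fin d1) (Fin d2) ℝ)
    (S : Fin n → Fin d1 × Fin d2) (y : Fin n → Bool) : ℝ :=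
  ∏ t, π (S t).1 (S t).2 *
    (if y t then F (Mstar (S t).1 (S t).2) else 1 - F (Mstar (S t).1 (S t).2))

/-!
The empirical excess log-loss of `M̂` over `M*` is nonpositive, so its population version is at most
the uniform deviation of the two over `K_max(α, R)`. By McDiarmid's inequality
(`hasSubgaussianMGF_pi`) that deviation concentrates at scale `U_α √n` around its mean, and
symmetrization bounds the mean by a Rademacher complexity. As the log-loss is `L_α`-Lipschitz,
contraction reduces the complexity to that of the max-norm ball, which by Grothendieck's inequality
lies in a constant multiple of the convex hull of the sign matrices of rank one; there are at most
`2 ^ (d1 + d2)` of these, and Massart's finite class lemma (`rademacherComplexity_le_sqrt_log_card`)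
gives `R √(n (d1 + d2))`.

The population excess loss is an average of binary relative entropies. The relative entropy
dominates the squared Hellinger distance, which is computed by the variance-stabilising
transformation `arcsin √F`, whose derivative is at least `1 / (2 √β_α)` in absolute value; this
turns the excess loss into a bound on the weighted Frobenius norm.
-/

section RademacherSigns

lemma sum_update_mul_of_notMem {ι : Type*} [DecidableEq ι] {s : Finset ι} {t : ι} (ht : t ∉ s)
    (ε : ι → ℤˣ) (u : ℤˣ) (x : ι → ℝ) :
    ∑ l ∈ s, (Function.update ε t u l : ℝ) * x l = ∑ l ∈ s, (ε l : ℝ) * x l :=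
  Finset.sum_congr rfl fun l hl ↦ by
    rw [Function.update_of_ne (ne_of_mem_of_not_mem hl ht)]

variable {ι : Type*} [Fintype ι] [DecidableEq ι]

lemma expect_sign_update_neg {M : Type*} [AddCommMonoid M] [Module ℚ≥0 M]
    (φ : (ι → ℤˣ) → M) (t : ι) :
    𝔼 ε, φ (Function.update ε t (-ε t)) = 𝔼 ε, φ ε := by
  have flip_involutive : Function.Involutive
      fun ε : ι → ℤˣ ↦ Function.update ε t (-ε t) := fun ε ↦ by simp
  exact Fintype.expect_equiv (flip_involutive.toPerm _) _ _ fun ε ↦ rfl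

lemma expect_sign_eq_expect_avg (t : ι) (f : ℝ → (ι → ℤˣ) → ℝ)
    (hf : ∀ u ε, f u (Function.update ε t (-ε t)) = f u ε) :
    𝔼 ε : ι → ℤˣ, f (ε t) ε = 𝔼 ε, (f 1 ε + f (-1) ε) / 2 := by
  have h_flip := expect_sign_update_neg (fun ε : ι → ℤˣ ↦ f (ε t) ε) t
  calc 𝔼 ε : ι → ℤˣ, f (ε t) ε
      = (𝔼 ε : ι → ℤˣ, f (ε t) ε + 𝔼 ε : ι → ℤˣ, f (-(ε t : ℝ)) ε) / 2 := by
        simp only [hf, Function.update_self, Units.val_neg, Int.cast_neg] at h_flip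
        rw [h_flip]; ring
    _ = 𝔼 ε, (f 1 ε + f (-1) ε) / 2 := by
        rw [← Finset.expect_add_distrib, Finset.expect_div]
        refine Finset.expect_congr rfl fun ε _ ↦ ?_
        rcases Int.units_eq_one_or (ε t) with h | h <;> simp [h, add_comm]

lemma expect_sign_sum_mul_sum (s : Finset ι) (x y : ι → ℝ) :
    𝔼 ε : ι → ℤˣ, (∑ l ∈ s, (ε l : ℝ) * x l) * ∑ l ∈ s, (ε l : ℝ) * y l = ∑ l ∈ s, x l * y l := by
  induction s using Finset.induction_on with
  | empty => simp
  | insert t s ht ih =>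
    simp only [Finset.sum_insert ht]
    calc _ = _ := expect_sign_eq_expect_avg t (fun u ε ↦ (u * x t + ∑ l ∈ s, (ε l : ℝ) * x l) *
            (u * y t + ∑ l ∈ s, (ε l : ℝ) * y l)) (by simp [sum_update_mul_of_notMem ht])
      _ = 𝔼 ε : ι → ℤˣ,
            (x t * y t + (∑ l ∈ s, (ε l : ℝ) * x l) * ∑ l ∈ s, (ε l : ℝ) * y l) :=
          Finset.expect_congr rfl fun ε _ ↦ by ring
      _ = _ := by rw [Finset.expect_add_distrib, ih, Fintype.expect_const]

lemma expect_sign_sum_sq (s : Finset ι) (x : ι → ℝ) :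
    𝔼 ε : ι → ℤˣ, (∑ l ∈ s, (ε l : ℝ) * x l) ^ 2 = ∑ l ∈ s, x l ^ 2 := by
  simpa only [pow_two] using expect_sign_sum_mul_sum s x x

lemma expect_sign_sum_pow_four_le (s : Finset ι) (x : ι → ℝ) :
    𝔼 ε : ι → ℤˣ, (∑ l ∈ s, (ε l : ℝ) * x l) ^ 4 ≤ 3 * (∑ l ∈ s, x l ^ 2) ^ 2 := by
  induction s using Finset.induction_on with
  | empty => simp
  | insert t s ht ih =>
    simp only [Finset.sum_insert ht]
    calc _ = _ := expect_sign_eq_expect_avg t (fun u ε ↦ (u * x t + ∑ l ∈ s, (ε l : ℝ) * x l) ^ 4)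
            (by simp [sum_update_mul_of_notMem ht])
      _ = 𝔼 ε : ι → ℤˣ, (x t ^ 4 + 6 * x t ^ 2 *
            (∑ l ∈ s, (ε l : ℝ) * x l) ^ 2 +
            (∑ l ∈ s, (ε l : ℝ) * x l) ^ 4) :=
          Finset.expect_congr rfl fun ε _ ↦ by ring
      _ = x t ^ 4 + 6 * x t ^ 2 * (∑ l ∈ s, x l ^ 2) +
            𝔼 ε : ι → ℤˣ, (∑ l ∈ s, (ε l : ℝ) * x l) ^ 4 := by
          simp only [Finset.expect_add_distrib, ← Finset.mul_expect, expect_sign_sum_sq,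
            Fintype.expect_const]
      _ ≤ 3 * (x t ^ 2 + ∑ l ∈ s, x l ^ 2) ^ 2 := by nlinarith [sq_nonneg (x t ^ 2)]

lemma expect_exp_sign_sum_le (s : Finset ι) (x : ι → ℝ) :
    𝔼 ε : ι → ℤˣ, Real.exp (∑ l ∈ s, (ε l : ℝ) * x l) ≤ Real.exp ((∑ l ∈ s, x l ^ 2) / 2) := by
  induction s using Finset.induction_on with
  | empty => simp
  | insert t s ht ih =>
    simp only [Finset.sum_insert ht]
    calc _ = _ := expect_sign_eq_expect_avg t
            (fun u ε ↦ Real.exp (u * x t + ∑ l ∈ s, (ε l : ℝ) * x l))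
            (by simp [sum_update_mul_of_notMem ht])
      _ = Real.cosh (x t) * 𝔼 ε : ι → ℤˣ, Real.exp (∑ l ∈ s, (ε l : ℝ) * x l) := by
          rw [Finset.mul_expect]
          refine Finset.expect_congr rfl fun ε _ ↦ ?_
          rw [Real.exp_add, Real.exp_add, Real.cosh_eq, one_mul, neg_one_mul]
          ring
      _ ≤ Real.exp (x t ^ 2 / 2) * Real.exp ((∑ l ∈ s, x l ^ 2) / 2) :=
          mul_le_mul (Real.cosh_le_exp_half_sq _) ih
            (Finset.expect_nonneg fun _ _ ↦ (Real.exp_pos _).le) (Real.exp_pos _).le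
      _ = Real.exp ((x t ^ 2 + ∑ l ∈ s, x l ^ 2) / 2) := by rw [← Real.exp_add, add_div]

lemma exp_expect_le {Ω : Type*} [Fintype Ω] [Nonempty Ω] (f : Ω → ℝ) :
    Real.exp (𝔼 ω, f ω) ≤ 𝔼 ω, Real.exp (f ω) := by
  set m := 𝔼 ω, f ω with hm
  calc Real.exp m = 𝔼 ω, Real.exp m * (f ω - m + 1) := by
        rw [← Finset.mul_expect, Finset.expect_add_distrib, Finset.expect_sub_distrib,
          Fintype.expect_const, Fintype.expect_const, ← hm]
        ring
    _ ≤ 𝔼 ω, Real.exp (f ω) := by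
        refine Finset.expect_le_expect fun ω _ ↦ ?_
        rw [← sub_add_cancel (f ω) m, add_comm _ m, Real.exp_add, add_sub_cancel_left]
        exact mul_le_mul_of_nonneg_left (Real.add_one_le_exp _) (Real.exp_pos _).le

end RademacherSigns

section RademacherComplexity

variable {I ι : Type*} [Fintype ι] [DecidableEq ι]

/-- The Rademacher complexity `𝔼_ε sup_i ∑ₜ εₜ z i t` of a family of vectors `z i`, with `ε`
uniform on `{±1}^ι` (signs being the units of `ℤ`) and without the normalization by `card ι`. -/
noncomputable def rademacherComplexity (z : I → ι → ℝ) : ℝ :=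
  𝔼 ε : ι → ℤˣ, ⨆ i, ∑ t, (ε t : ℝ) * z i t

lemma rademacherComplexity_const_mul {c : ℝ} (hc : 0 ≤ c) (z : I → ι → ℝ) :
    rademacherComplexity (fun i t ↦ c * z i t) = c * rademacherComplexity z := by
  simp only [rademacherComplexity, mul_left_comm _ c, ← Finset.mul_sum, ← Finset.mul_expect,
    ← Real.mul_iSup_of_nonneg hc]

lemma iSup_add_add_iSup_sub_le [Finite I] [Nonempty I] {a b c : I → ℝ}
    (hab : ∀ i j, |b i - b j| ≤ |a i - a j|) :
    (⨆ i, (b i + c i)) + (⨆ i, (-b i + c i)) ≤ (⨆ i, (a i + c i)) + ⨆ i, (-a i + c i) := by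
  obtain ⟨i, hi⟩ := exists_eq_ciSup_of_finite (f := fun i ↦ b i + c i)
  obtain ⟨j, hj⟩ := exists_eq_ciSup_of_finite (f := fun i ↦ -b i + c i)
  have plus_le := le_ciSup <| Finite.bddAbove_range fun i ↦ a i + c i
  have minus_le := le_ciSup <| Finite.bddAbove_range fun i ↦ -a i + c i
  have b_le : b i - b j ≤ |a i - a j| := (le_abs_self _).trans (hab i j)
  rw [← hi, ← hj]
  rcases abs_cases (a i - a j) with ⟨h, -⟩ | ⟨h, -⟩
  · linarith [plus_le i, minus_le j]
  · linarith [plus_le j, minus_le i]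

lemma rademacherComplexity_update_le [Finite I] [Nonempty I] (z : I → ι → ℝ)
    (t : ι) {b : I → ℝ} (hb : ∀ i j, |b i - b j| ≤ |z i t - z j t|) :
    rademacherComplexity (fun i ↦ Function.update (z i) t (b i)) ≤ rademacherComplexity z := by
  have sum_eq (ε : ι → ℤˣ) (y : ι → ℝ) : ∑ s, (ε s : ℝ) * y s =
      ε t * y t + ∑ s ∈ Finset.univ.erase t, (ε s : ℝ) * y s :=
    (Finset.add_sum_erase _ _ (Finset.mem_univ t)).symm
  have sum_erase (ε : ι → ℤˣ) (i : I) :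
      ∑ s ∈ Finset.univ.erase t, (ε s : ℝ) * Function.update (z i) t (b i) s =
        ∑ s ∈ Finset.univ.erase t, (ε s : ℝ) * z i s :=
    Finset.sum_congr rfl fun s hs ↦ by rw [Function.update_of_ne (Finset.ne_of_mem_erase hs)]
  have avg (y : I → ℝ) := expect_sign_eq_expect_avg t
    (fun u ε ↦ ⨆ i, (u * y i + ∑ s ∈ Finset.univ.erase t, (ε s : ℝ) * z i s))
    fun u ε ↦ by simp only [sum_update_mul_of_notMem (Finset.notMem_erase t Finset.univ)]
  simp only [rademacherComplexity, sum_eq, sum_erase, Function.update_self]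
  rw [avg, avg]
  refine Finset.expect_le_expect fun ε _ ↦ ?_
  simp only [one_mul, neg_one_mul]
  linarith [iSup_add_add_iSup_sub_le (c := fun i ↦ ∑ s ∈ Finset.univ.erase t, (ε s : ℝ) * z i s) hb]

lemma rademacherComplexity_le_of_abs_sub_le [Finite I] [Nonempty I] {a b : I → ι → ℝ}
    (hab : ∀ i j t, |b i t - b j t| ≤ |a i t - a j t|) :
    rademacherComplexity b ≤ rademacherComplexity a := by
  suffices h : ∀ s : Finset ι, rademacherComplexity (fun i ↦ s.piecewise (b i) (a i)) ≤
      rademacherComplexity a by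
    simpa using h Finset.univ
  intro s
  induction s using Finset.induction_on with
  | empty => simp
  | insert t s ht ih =>
    simp only [Finset.piecewise_insert]
    refine (rademacherComplexity_update_le _ t fun i j ↦ ?_).trans ih
    simpa only [Finset.piecewise_eq_of_notMem s _ _ ht] using hab i j t

lemma mul_rademacherComplexity_le [Fintype I] [Nonempty I] {z : I → ι → ℝ} {v : ℝ}
    (hz : ∀ i, ∑ t, z i t ^ 2 ≤ v) (l : ℝ) :
    l * rademacherComplexity z ≤ Real.log (Fintype.card I) + v / 2 * (l * l) := by
  have card_pos : (0 : ℝ) < Fintype.card I := by exact_mod_cast Fintype.card_pos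
  rw [← Real.exp_le_exp, Real.exp_add, Real.exp_log card_pos]
  calc Real.exp (l * rademacherComplexity z)
      ≤ 𝔼 ε : ι → ℤˣ, Real.exp (l * ⨆ i, ∑ t, (ε t : ℝ) * z i t) := by
        rw [rademacherComplexity, Finset.mul_expect]
        exact exp_expect_le _
    _ ≤ 𝔼 ε : ι → ℤˣ, ∑ i, Real.exp (∑ t, (ε t : ℝ) * (l * z i t)) := by
        refine Finset.expect_le_expect fun ε _ ↦ ?_
        obtain ⟨i, hi⟩ := exists_eq_ciSup_of_finite (f := fun i ↦ ∑ t, (ε t : ℝ) * z i t)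
        simp only [← hi, mul_left_comm _ l, ← Finset.mul_sum]
        exact Finset.single_le_sum (f := fun i ↦ Real.exp (l * ∑ t, (ε t : ℝ) * z i t))
          (fun _ _ ↦ (Real.exp_pos _).le) (Finset.mem_univ i)
    _ = ∑ i, 𝔼 ε : ι → ℤˣ, Real.exp (∑ t, (ε t : ℝ) * (l * z i t)) := Finset.expect_sum_comm _ _ _
    _ ≤ ∑ _i : I, Real.exp (v / 2 * (l * l)) := by
        refine Finset.sum_le_sum fun i _ ↦ (expect_exp_sign_sum_le _ _).trans ?_
        gcongr
        simp only [mul_pow, ← Finset.mul_sum]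
        nlinarith [mul_le_mul_of_nonneg_left (hz i) (sq_nonneg l)]
    _ = Fintype.card I * Real.exp (v / 2 * (l * l)) := by simp

lemma rademacherComplexity_le_sqrt_log_card [Fintype I] [Nonempty I] {z : I → ι → ℝ} {v : ℝ}
    (hz : ∀ i, ∑ t, z i t ^ 2 ≤ v) :
    rademacherComplexity z ≤ √(2 * v * Real.log (Fintype.card I)) := by
  have quadratic_nonneg (l : ℝ) : 0 ≤ v / 2 * (l * l) + -rademacherComplexity z * l +
      Real.log (Fintype.card I) := by
    linarith [mul_rademacherComplexity_le hz l]
  have discrim_nonpos := discrim_le_zero quadratic_nonneg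
  unfold discrim at discrim_nonpos
  exact Real.le_sqrt_of_sq_le (by linarith)

end RademacherComplexity

section Clip

/-- The truncation of `x` to the interval `[-c, c]`. -/
def clip (c x : ℝ) : ℝ := max (-c) (min x c)

variable {c : ℝ}

lemma abs_clip_le (hc : 0 ≤ c) (x : ℝ) : |clip c x| ≤ c :=
  abs_le.2 ⟨le_max_left _ _, max_le (neg_le_self hc) (min_le_right _ _)⟩

lemma clip_cases (hc : 0 ≤ c) (x : ℝ) :
    x < -c ∧ clip c x = -c ∨ |x| ≤ c ∧ clip c x = x ∨ c < x ∧ clip c x = c := by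
  rcases lt_or_ge c x with h | h
  · exact .inr (.inr ⟨h, by rw [clip, min_eq_right h.le, max_eq_right (neg_le_self hc)]⟩)
  rcases lt_or_ge x (-c) with h' | h'
  · exact .inl ⟨h', by rw [clip, min_eq_left h, max_eq_left h'.le]⟩
  · exact .inr (.inl ⟨abs_le.2 ⟨h', h⟩, by rw [clip, min_eq_left h, max_eq_right h']⟩)

lemma clip_sq_le (hc : 0 ≤ c) (x : ℝ) : clip c x ^ 2 ≤ x ^ 2 := by
  rcases clip_cases hc x with ⟨h, e⟩ | ⟨-, e⟩ | ⟨h, e⟩ <;> rw [e] <;> nlinarith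

lemma sub_clip_sq_le (hc : 0 < c) (x : ℝ) : (x - clip c x) ^ 2 ≤ x ^ 4 / (16 * c ^ 2) := by
  suffices h : |x - clip c x| ≤ x ^ 2 / (4 * c) by
    calc (x - clip c x) ^ 2 = |x - clip c x| ^ 2 := (sq_abs _).symm
      _ ≤ (x ^ 2 / (4 * c)) ^ 2 := by gcongr
      _ = x ^ 4 / (16 * c ^ 2) := by ring
  rw [le_div_iff₀ (by positivity)]
  rcases clip_cases hc.le x with ⟨h, e⟩ | ⟨-, e⟩ | ⟨h, e⟩ <;> rw [e]
  · rw [abs_of_neg (by linarith)]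
    nlinarith [sq_nonneg (x + 2 * c)]
  · simp [sq_nonneg]
  · rw [abs_of_pos (by linarith)]
    nlinarith [sq_nonneg (x - 2 * c)]

end Clip

section Grothendieck

variable {ι κ : Type*} [Fintype ι] [Fintype κ] (A : Matrix ι κ ℝ)

/-- The norm of `A` as an operator `ℓ∞ → ℓ₁`, the maximum of the bilinear form of `A` over pairs of
sign vectors. -/
noncomputable def inftyOneNorm : ℝ :=
  ⨆ p : (ι → ℤˣ) × (κ → ℤˣ), ∑ i, ∑ j, A i j * (p.1 i * p.2 j)

/-- The dual of the max-norm: the supremum of the bilinear form of `A` over unit vectors of a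
Euclidean space, the semidefinite relaxation of `inftyOneNorm`. -/
noncomputable def gammaTwoDual : ℝ :=
  sSup {c | ∃ (k : ℕ) (u : ι → EuclideanSpace ℝ (Fin k)) (v : κ → EuclideanSpace ℝ (Fin k)),
    (∀ i, ‖u i‖ ≤ 1) ∧ (∀ j, ‖v j‖ ≤ 1) ∧ c = ∑ i, ∑ j, A i j * inner ℝ (u i) (v j)}

variable {A}

lemma exists_mul_sum_le_sum_sign_mul (x : ι → ℝ) :
    ∃ s : ι → ℤˣ, ∀ (a : ι → ℝ) (α : ℝ), (∀ i, |a i| ≤ α) →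
      ∑ i, a i * x i ≤ α * ∑ i, (s i : ℝ) * x i := by
  have sign_mul (y : ℝ) : ∃ u : ℤˣ, (u : ℝ) * y = |y| := by
    rcases abs_choice y with h | h
    · exact ⟨1, by simp [h]⟩
    · exact ⟨-1, by simp [h]⟩
  choose s hs using fun i ↦ sign_mul (x i)
  refine ⟨s, fun a α ha ↦ ?_⟩
  simp only [hs, Finset.mul_sum]
  refine Finset.sum_le_sum fun i _ ↦ (le_abs_self _).trans ?_
  rw [abs_mul]
  exact mul_le_mul_of_nonneg_right (ha i) (abs_nonneg _)

lemma sum_mul_mul_le_inftyOneNorm {a : ι → ℝ} {b : κ → ℝ} {α β : ℝ} (hα : 0 ≤ α) (hβ : 0 ≤ β)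
    (ha : ∀ i, |a i| ≤ α) (hb : ∀ j, |b j| ≤ β) :
    ∑ i, ∑ j, A i j * (a i * b j) ≤ α * β * inftyOneNorm A := by
  obtain ⟨s, hs⟩ := exists_mul_sum_le_sum_sign_mul fun i ↦ ∑ j, A i j * b j
  obtain ⟨t, ht⟩ := exists_mul_sum_le_sum_sign_mul fun j ↦ ∑ i, A i j * s i
  calc ∑ i, ∑ j, A i j * (a i * b j) = ∑ i, a i * ∑ j, A i j * b j := by
        simp only [Finset.mul_sum, mul_left_comm]
    _ ≤ α * ∑ i, s i * ∑ j, A i j * b j := hs a α ha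
    _ = α * ∑ j, b j * ∑ i, A i j * s i := by
        simp only [Finset.mul_sum]
        rw [Finset.sum_comm]
        congr! 2 with j _ i _
        ring
    _ ≤ α * (β * ∑ j, t j * ∑ i, A i j * s i) := by gcongr; exact ht b β hb
    _ = α * β * ∑ i, ∑ j, A i j * (s i * t j) := by
        simp only [Finset.mul_sum]
        rw [Finset.sum_comm]
        congr! 2 with i _ j _
        ring
    _ ≤ α * β * inftyOneNorm A := by
        gcongr
        exact le_ciSup (Finite.bddAbove_range fun p : (ι → ℤˣ) × (κ → ℤˣ) ↦
          ∑ i, ∑ j, A i j * (p.1 i * p.2 j : ℝ)) (s, t)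

lemma sum_mul_inner_le_gammaTwoDual {k : ℕ} {u : ι → EuclideanSpace ℝ (Fin k)}
    {v : κ → EuclideanSpace ℝ (Fin k)} (hu : ∀ i, ‖u i‖ ≤ 1) (hv : ∀ j, ‖v j‖ ≤ 1) :
    ∑ i, ∑ j, A i j * inner ℝ (u i) (v j) ≤ gammaTwoDual A := by
  refine le_csSup ⟨∑ i, ∑ j, |A i j|, ?_⟩ ⟨k, u, v, hu, hv, rfl⟩
  rintro _ ⟨k, u, v, hu, hv, rfl⟩
  refine Finset.sum_le_sum fun i _ ↦ Finset.sum_le_sum fun j _ ↦ (le_abs_self _).trans ?_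
  rw [abs_mul]
  refine mul_le_of_le_one_right (abs_nonneg _) ((abs_real_inner_le_norm _ _).trans ?_)
  exact mul_le_one₀ (hu i) (norm_nonneg _) (hv j)

lemma gammaTwoDual_nonneg : 0 ≤ gammaTwoDual A := by
  simpa using sum_mul_inner_le_gammaTwoDual (A := A) (k := 0) (u := 0) (v := 0) (by simp) (by simp)

lemma sum_mul_inner_le {E : Type*} [NormedAddCommGroup E] [InnerProductSpace ℝ E]
    [FiniteDimensional ℝ E] {u : ι → E} {v : κ → E} {a b : ℝ} (ha : 0 ≤ a) (hb : 0 ≤ b)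
    (hu : ∀ i, ‖u i‖ ≤ a) (hv : ∀ j, ‖v j‖ ≤ b) :
    ∑ i, ∑ j, A i j * inner ℝ (u i) (v j) ≤ a * b * gammaTwoDual A := by
  have norm_le {w : E} {c : ℝ} (hc : 0 ≤ c) (hw : ‖w‖ ≤ c) : ‖c⁻¹ • w‖ ≤ 1 := by
    rw [norm_smul, norm_inv, Real.norm_of_nonneg hc]
    exact inv_mul_le_one_of_le₀ hw hc
  have smul_eq {w : E} {c : ℝ} (hw : ‖w‖ ≤ c) : c • c⁻¹ • w = w := by
    rcases eq_or_ne c 0 with rfl | hc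
    · simp [norm_le_zero_iff.1 hw]
    · exact smul_inv_smul₀ hc w
  let φ := (stdOrthonormalBasis ℝ E).repr
  calc ∑ i, ∑ j, A i j * inner ℝ (u i) (v j)
      = a * b * ∑ i, ∑ j, A i j * inner ℝ (φ (a⁻¹ • u i)) (φ (b⁻¹ • v j)) := by
        simp only [Finset.mul_sum, φ.inner_map_map]
        refine Finset.sum_congr rfl fun i _ ↦ Finset.sum_congr rfl fun j _ ↦ ?_
        nth_rw 1 [← smul_eq (hu i), ← smul_eq (hv j)]
        rw [real_inner_smul_left, real_inner_smul_right]
        ring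
    _ ≤ a * b * gammaTwoDual A := by
        gcongr
        exact sum_mul_inner_le_gammaTwoDual (fun i ↦ (φ.norm_map _).trans_le (norm_le ha (hu i)))
          fun j ↦ (φ.norm_map _).trans_le (norm_le hb (hv j))

lemma sum_mul_expect_le {Ω : Type*} [Fintype Ω] {f : ι → Ω → ℝ} {h : κ → Ω → ℝ} {a b : ℝ}
    (ha : 0 ≤ a) (hb : 0 ≤ b) (hf : ∀ i, 𝔼 ω, f i ω ^ 2 ≤ a ^ 2)
    (hh : ∀ j, 𝔼 ω, h j ω ^ 2 ≤ b ^ 2) :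
    ∑ i, ∑ j, A i j * 𝔼 ω, f i ω * h j ω ≤ a * b * gammaTwoDual A := by
  let embed (x : Ω → ℝ) : EuclideanSpace ℝ Ω := (√(Fintype.card Ω))⁻¹ • WithLp.toLp 2 x
  have inner_embed (x y : Ω → ℝ) : inner ℝ (embed x) (embed y) = 𝔼 ω, x ω * y ω := by
    rw [real_inner_smul_left, real_inner_smul_right, ← mul_assoc, ← mul_inv,
      Real.mul_self_sqrt (Nat.cast_nonneg _), Fintype.expect_eq_sum_div_card, div_eq_inv_mul]
    simp [EuclideanSpace.inner_toLp_toLp, dotProduct, mul_comm]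
  have norm_embed_le {x : Ω → ℝ} {c : ℝ} (hc : 0 ≤ c) (hx : 𝔼 ω, x ω ^ 2 ≤ c ^ 2) :
      ‖embed x‖ ≤ c := by
    refine abs_le_of_sq_le_sq' ?_ hc |>.2
    rw [← real_inner_self_eq_norm_sq, inner_embed]
    simpa only [pow_two] using hx
  simp only [← inner_embed]
  exact sum_mul_inner_le ha hb (fun i ↦ norm_embed_le ha (hf i)) fun j ↦ norm_embed_le hb (hh j)

lemma expect_sub_clip_sign_sum_sq_le {n : Type*} [Fintype n] [DecidableEq n] {x : n → ℝ}
    (hx : ∑ l, x l ^ 2 ≤ 1) :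
    𝔼 ε : n → ℤˣ, (∑ l, (ε l : ℝ) * x l - clip 2 (∑ l, (ε l : ℝ) * x l)) ^ 2 ≤ (1 / 4) ^ 2 := by
  calc 𝔼 ε : n → ℤˣ, (∑ l, (ε l : ℝ) * x l - clip 2 (∑ l, (ε l : ℝ) * x l)) ^ 2
      ≤ 𝔼 ε : n → ℤˣ, (∑ l, (ε l : ℝ) * x l) ^ 4 / (16 * 2 ^ 2) :=
        Finset.expect_le_expect fun ε _ ↦ sub_clip_sq_le two_pos _
    _ ≤ 3 * (∑ l, x l ^ 2) ^ 2 / (16 * 2 ^ 2) := by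
        rw [← Finset.expect_div]
        gcongr
        exact expect_sign_sum_pow_four_le _ _
    _ ≤ (1 / 4) ^ 2 := by
        have : (∑ l, x l ^ 2) ^ 2 ≤ 1 := pow_le_one₀ (by positivity) hx
        linarith

/-- Grothendieck's inequality. The vectors are realized as Rademacher sums; clipping these at level
`2` changes them by at most `1/4` in `L²`, so the error terms are absorbed by `gammaTwoDual A`. -/
theorem gammaTwoDual_le : gammaTwoDual A ≤ 8 * inftyOneNorm A := by
  suffices h : gammaTwoDual A ≤ 4 * inftyOneNorm A + gammaTwoDual A / 2 by linarith
  refine csSup_le ⟨0, 0, 0, 0, by simp⟩ ?_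
  rintro _ ⟨k, u, v, hu, hv, rfl⟩
  let G (w : EuclideanSpace ℝ (Fin k)) (ε : Fin k → ℤˣ) : ℝ := ∑ l, ε l * w l
  have expect_G_mul (w w' : EuclideanSpace ℝ (Fin k)) : inner ℝ w w' = 𝔼 ε, G w ε * G w' ε := by
    rw [expect_sign_sum_mul_sum]
    simp [PiLp.inner_apply, mul_comm]
  have sum_sq_le {w : EuclideanSpace ℝ (Fin k)} (hw : ‖w‖ ≤ 1) : ∑ l, w l ^ 2 ≤ 1 := by
    rw [← EuclideanSpace.real_norm_sq_eq]
    exact pow_le_one₀ (norm_nonneg w) hw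
  have expect_G_sq {w : EuclideanSpace ℝ (Fin k)} (hw : ‖w‖ ≤ 1) : 𝔼 ε, G w ε ^ 2 ≤ 1 ^ 2 :=
    (expect_sign_sum_sq _ _).trans_le ((sum_sq_le hw).trans (one_pow 2).ge)
  have expect_clip_sq {w : EuclideanSpace ℝ (Fin k)} (hw : ‖w‖ ≤ 1) :
      𝔼 ε, clip 2 (G w ε) ^ 2 ≤ 1 ^ 2 :=
    (Finset.expect_le_expect fun ε _ ↦ clip_sq_le two_pos.le _).trans (expect_G_sq hw)
  have expect_sub_clip_sq {w : EuclideanSpace ℝ (Fin k)} (hw : ‖w‖ ≤ 1) :=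
    expect_sub_clip_sign_sum_sq_le (sum_sq_le hw)
  have decomposition (x y : ℝ) : x * y = clip 2 x * clip 2 y + clip 2 x * (y - clip 2 y) +
      (x - clip 2 x) * y := by ring
  calc ∑ i, ∑ j, A i j * inner ℝ (u i) (v j)
      = 𝔼 ε, ∑ i, ∑ j, A i j * (clip 2 (G (u i) ε) * clip 2 (G (v j) ε)) +
        ∑ i, ∑ j, A i j * 𝔼 ε, clip 2 (G (u i) ε) * (G (v j) ε - clip 2 (G (v j) ε)) +
        ∑ i, ∑ j, A i j * 𝔼 ε, (G (u i) ε - clip 2 (G (u i) ε)) * G (v j) ε := by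
        simp only [expect_G_mul, decomposition (G _ _), Finset.expect_add_distrib, mul_add,
          Finset.sum_add_distrib, Finset.expect_sum_comm, Finset.mul_expect]
    _ ≤ 2 * 2 * inftyOneNorm A + 1 * (1 / 4) * gammaTwoDual A + 1 / 4 * 1 * gammaTwoDual A := by
        refine add_le_add_three (Finset.expect_le Finset.univ_nonempty fun ε _ ↦ ?_) ?_ ?_
        · exact sum_mul_mul_le_inftyOneNorm two_pos.le two_pos.le
            (fun i ↦ abs_clip_le two_pos.le _) fun j ↦ abs_clip_le two_pos.le _
        · exact sum_mul_expect_le one_pos.le (by norm_num) (fun i ↦ expect_clip_sq (hu i))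
            fun j ↦ expect_sub_clip_sq (hv j)
        · exact sum_mul_expect_le (by norm_num) one_pos.le (fun i ↦ expect_sub_clip_sq (hu i))
            fun j ↦ expect_G_sq (hv j)
    _ = 4 * inftyOneNorm A + gammaTwoDual A / 2 := by ring

end Grothendieck

section MaxNorm

lemma norm_toLp_row_le_rowMaxNorm {n k : ℕ} (U : Matrix (Fin n) (Fin k) ℝ) (i : Fin n) :
    ‖WithLp.toLp 2 (U i)‖ ≤ rowMaxNorm U := by
  simpa [EuclideanSpace.norm_eq, rowMaxNorm] using
    le_ciSup (Finite.bddAbove_range fun i ↦ √(∑ j, U i j ^ 2)) i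

lemma maxNorm_nonneg {d1 d2 : ℕ} (M : Matrix (Fin d1) (Fin d2) ℝ) : 0 ≤ maxNorm M := by
  refine Real.sInf_nonneg ?_
  rintro _ ⟨_, U, V, -, -, rfl⟩
  exact mul_nonneg (rowMaxNorm_nonneg U) (rowMaxNorm_nonneg V)

lemma exists_eq_mul_transpose {d1 d2 : ℕ} (M : Matrix (Fin d1) (Fin d2) ℝ) :
    ∃ (k : ℕ) (U : Matrix (Fin d1) (Fin k) ℝ) (V : Matrix (Fin d2) (Fin k) ℝ),
      0 < k ∧ M = U * Vᵀ := by
  refine ⟨d2 + 1, .of fun i ↦ Fin.cons 0 (M i), .of fun j ↦ Fin.cons 0 (Pi.single j 1),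
    d2.succ_pos, ?_⟩
  ext i j
  simp [Matrix.mul_apply, Fin.sum_univ_succ, Pi.single_apply]

lemma sum_mul_le_gammaTwoDual_mul_maxNorm {d1 d2 : ℕ} (A M : Matrix (Fin d1) (Fin d2) ℝ) :
    ∑ i, ∑ j, A i j * M i j ≤ gammaTwoDual A * maxNorm M := by
  rw [maxNorm, ← smul_eq_mul, ← Real.sInf_smul_of_nonneg gammaTwoDual_nonneg]
  obtain ⟨k, U, V, hk, hM⟩ := exists_eq_mul_transpose M
  refine le_csInf (Set.Nonempty.smul_set ⟨_, k, U, V, hk, hM, rfl⟩) ?_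
  clear U V hM
  rintro _ ⟨_, ⟨_, U, V, -, rfl, rfl⟩, rfl⟩
  calc ∑ i, ∑ j, A i j * (U * Vᵀ) i j
      = ∑ i, ∑ j, A i j * inner ℝ (WithLp.toLp 2 (U i)) (WithLp.toLp 2 (V j)) := by
        simp [EuclideanSpace.inner_toLp_toLp, Matrix.mul_apply, dotProduct, mul_comm]
    _ ≤ rowMaxNorm U * rowMaxNorm V * gammaTwoDual A :=
        sum_mul_inner_le (rowMaxNorm_nonneg U) (rowMaxNorm_nonneg V)
          (norm_toLp_row_le_rowMaxNorm U) (norm_toLp_row_le_rowMaxNorm V)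
    _ = gammaTwoDual A • (rowMaxNorm U * rowMaxNorm V) := by rw [smul_eq_mul, mul_comm]

lemma sum_mul_le_inftyOneNorm_mul_maxNorm {d1 d2 : ℕ} (A M : Matrix (Fin d1) (Fin d2) ℝ) :
    ∑ i, ∑ j, A i j * M i j ≤ 8 * inftyOneNorm A * maxNorm M :=
  (sum_mul_le_gammaTwoDual_mul_maxNorm A M).trans
    (mul_le_mul_of_nonneg_right gammaTwoDual_le (maxNorm_nonneg M))

/-- For fixed signs `ε` the Rademacher sum of `M` is the bilinear pairing of `M` with
`∑ₜ εₜ E_{x t}`, so Grothendieck's inequality replaces the max-norm ball by the sign matrices of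
rank one, of which there are at most `2 ^ (d1 + d2)`. -/
lemma rademacherComplexity_le_of_maxNorm_le {d1 d2 : ℕ} {I ι : Type*} [Nonempty I] [Fintype ι]
    [DecidableEq ι] {M : I → Matrix (Fin d1) (Fin d2) ℝ} {R : ℝ} (hM : ∀ i, maxNorm (M i) ≤ R)
    (x : ι → Fin d1 × Fin d2) :
    rademacherComplexity (fun i t ↦ M i (x t).1 (x t).2) ≤
      8 * R * rademacherComplexity
        fun (p : (Fin d1 → ℤˣ) × (Fin d2 → ℤˣ)) t ↦ (p.1 (x t).1 * p.2 (x t).2 : ℝ) := by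
  rw [rademacherComplexity, rademacherComplexity, Finset.mul_expect]
  refine Finset.expect_le_expect fun ε _ ↦ ciSup_le fun i ↦ ?_
  let A : Matrix (Fin d1) (Fin d2) ℝ := ∑ t, Matrix.single (x t).1 (x t).2 (ε t : ℝ)
  have sum_A_mul (B : Fin d1 → Fin d2 → ℝ) :
      ∑ k, ∑ l, A k l * B k l = ∑ t, (ε t : ℝ) * B (x t).1 (x t).2 := by
    simp only [A, Matrix.sum_apply, Finset.sum_mul]
    rw [Finset.sum_comm_cycle]
    refine Finset.sum_congr rfl fun t _ ↦ ?_
    simp [Matrix.single_apply, ite_and]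
  have inftyOneNorm_nonneg : 0 ≤ inftyOneNorm A := by
    linarith [gammaTwoDual_nonneg (A := A), gammaTwoDual_le (A := A)]
  calc ∑ t, (ε t : ℝ) * M i (x t).1 (x t).2 = ∑ k, ∑ l, A k l * M i k l := (sum_A_mul _).symm
    _ ≤ 8 * inftyOneNorm A * maxNorm (M i) := sum_mul_le_inftyOneNorm_mul_maxNorm A (M i)
    _ ≤ 8 * inftyOneNorm A * R := by gcongr; exact hM i
    _ = 8 * R * inftyOneNorm A := by ring
    _ = _ := by simp only [inftyOneNorm, sum_A_mul fun _ _ ↦ _]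

lemma rademacherComplexity_maxNorm_ball_le {d1 d2 : ℕ} {I ι : Type*} [Nonempty I] [Fintype ι]
    [DecidableEq ι] {M : I → Matrix (Fin d1) (Fin d2) ℝ} {R : ℝ} (hM : ∀ i, maxNorm (M i) ≤ R)
    (x : ι → Fin d1 × Fin d2) :
    rademacherComplexity (fun i t ↦ M i (x t).1 (x t).2) ≤
      16 * R * √(Fintype.card ι * (d1 + d2)) := by
  have R_nonneg : 0 ≤ R := (maxNorm_nonneg _).trans (hM (Classical.arbitrary I))
  have log_card_le : Real.log (Fintype.card ((Fin d1 → ℤˣ) × (Fin d2 → ℤˣ))) ≤ d1 + d2 := by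
    simp only [Fintype.card_prod, Fintype.card_pi_const, Fintype.card_units_int, ← pow_add]
    push_cast
    rw [Real.log_pow]
    push_cast
    exact mul_le_of_le_one_right (by positivity) (Real.log_two_lt_d9.le.trans (by norm_num))
  calc rademacherComplexity (fun i t ↦ M i (x t).1 (x t).2)
      ≤ 8 * R * √(2 * Fintype.card ι * Real.log _) := by
        refine (rademacherComplexity_le_of_maxNorm_le hM x).trans ?_
        gcongr
        refine rademacherComplexity_le_sqrt_log_card fun p ↦ le_of_eq ?_
        simp [mul_pow, ← Int.cast_pow, ← Units.val_pow_eq_pow_val, Int.units_sq]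
    _ ≤ 8 * R * √(2 ^ 2 * (Fintype.card ι * (d1 + d2))) := by
        gcongr 8 * R * √?_
        have card_nonneg : (0 : ℝ) ≤ Fintype.card ι := Nat.cast_nonneg _
        nlinarith [mul_le_mul_of_nonneg_left log_card_le card_nonneg,
          mul_nonneg card_nonneg (by positivity : (0 : ℝ) ≤ d1 + d2)]
    _ = 16 * R * √(Fintype.card ι * (d1 + d2)) := by
        rw [Real.sqrt_mul (by positivity), Real.sqrt_sq two_pos.le]
        ring

end MaxNorm

section BoundedDifferences

open MeasureTheory ProbabilityTheory
open scoped NNReal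

lemma hasSubgaussianMGF_of_abs_sub_le {X : Type*} [MeasurableSpace X] {μ : Measure X}
    [IsProbabilityMeasure μ] {f : X → ℝ} (hf : Measurable f) {c : ℝ≥0}
    (hc : ∀ a b, |f a - f b| ≤ c) :
    HasSubgaussianMGF (fun x ↦ f x - ∫ y, f y ∂μ) ((c / 2) ^ 2) μ := by
  have : Nonempty X := nonempty_of_isProbabilityMeasure μ
  have bddBelow : BddBelow (Set.range f) := by
    refine ⟨f (Classical.arbitrary X) - c, ?_⟩
    rintro _ ⟨x, rfl⟩
    linarith [(abs_le.1 (hc (Classical.arbitrary X) x)).2]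
  have mem_Icc (x : X) : f x ∈ Set.Icc (⨅ y, f y) ((⨅ y, f y) + c) := by
    refine ⟨ciInf_le bddBelow x, ?_⟩
    rw [← sub_le_iff_le_add]
    exact le_ciInf fun y ↦ by linarith [(abs_le.1 (hc x y)).2]
  simpa using hasSubgaussianMGF_of_mem_Icc hf.aemeasurable (.of_forall mem_Icc)

lemma hasSubgaussianMGF_prod {X Y : Type*} [MeasurableSpace X] [MeasurableSpace Y] {μ : Measure X}
    {ν : Measure Y} [SFinite μ] [SFinite ν] {f : X × Y → ℝ} {g : X → ℝ} {c c' : ℝ≥0}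
    (hf : Measurable f) (hg : HasSubgaussianMGF g c μ)
    (hfg : ∀ x, HasSubgaussianMGF (fun y ↦ f (x, y) - g x) c' ν) :
    HasSubgaussianMGF f (c + c') (μ.prod ν) := by
  have exp_section (t : ℝ) (x : X) (y : Y) :
      Real.exp (t * f (x, y)) = Real.exp (t * g x) * Real.exp (t * (f (x, y) - g x)) := by
    rw [← Real.exp_add]
    ring_nf
  have integral_section_le (t : ℝ) (x : X) :
      ∫ y, Real.exp (t * f (x, y)) ∂ν ≤ Real.exp (t * g x) * Real.exp (c' * t ^ 2 / 2) := by
    simp only [exp_section, integral_const_mul]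
    gcongr
    exact (hfg x).mgf_le t
  have integral_section_nonneg (t : ℝ) (x : X) : 0 ≤ ∫ y, Real.exp (t * f (x, y)) ∂ν :=
    integral_nonneg fun _ ↦ (Real.exp_pos _).le
  have integrable_exp (t : ℝ) : Integrable (fun p ↦ Real.exp (t * f p)) (μ.prod ν) := by
    have measurable_exp : Measurable fun p ↦ Real.exp (t * f p) := by fun_prop
    refine (integrable_prod_iff measurable_exp.aestronglyMeasurable).2 ⟨.of_forall fun x ↦ ?_, ?_⟩
    · simpa only [exp_section] using ((hfg x).integrable_exp_mul t).const_mul _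
    · simp only [Real.norm_eq_abs, Real.abs_exp]
      refine ((hg.integrable_exp_mul t).mul_const (Real.exp (c' * t ^ 2 / 2))).mono'
        measurable_exp.stronglyMeasurable.integral_prod_right'.aestronglyMeasurable
        (.of_forall fun x ↦ ?_)
      rw [Real.norm_of_nonneg (integral_section_nonneg t x)]
      exact integral_section_le t x
  refine ⟨integrable_exp, fun t ↦ ?_⟩
  calc mgf f (μ.prod ν) t = ∫ x, ∫ y, Real.exp (t * f (x, y)) ∂ν ∂μ :=
        integral_prod _ (integrable_exp t)
    _ ≤ ∫ x, Real.exp (t * g x) * Real.exp (c' * t ^ 2 / 2) ∂μ :=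
        integral_mono_of_nonneg (.of_forall (integral_section_nonneg t))
          ((hg.integrable_exp_mul t).mul_const _) (.of_forall (integral_section_le t))
    _ ≤ Real.exp (c * t ^ 2 / 2) * Real.exp (c' * t ^ 2 / 2) := by
        rw [integral_mul_const]
        gcongr
        exact hg.mgf_le t
    _ = Real.exp ((c + c' : ℝ≥0) * t ^ 2 / 2) := by
        rw [← Real.exp_add]
        push_cast
        ring_nf

lemma hasSubgaussianMGF_prod_sub_integral {X Y : Type*} [MeasurableSpace X] [MeasurableSpace Y]
    {μ : Measure X} {ν : Measure Y} [IsProbabilityMeasure μ] [IsProbabilityMeasure ν]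
    {f : X × Y → ℝ} (hf : Measurable f) {c c' : ℝ≥0} (hc : ∀ a b y, |f (a, y) - f (b, y)| ≤ c)
    (hc' : ∀ a, HasSubgaussianMGF (fun y ↦ f (a, y) - ∫ y', f (a, y') ∂ν) c' ν) :
    HasSubgaussianMGF (fun p ↦ f p - ∫ q, f q ∂μ.prod ν) ((c / 2) ^ 2 + c') (μ.prod ν) := by
  let g (a : X) : ℝ := ∫ y, f (a, y) ∂ν
  have measurable_g : Measurable g := hf.stronglyMeasurable.integral_prod_right'.measurable
  have integrable_section (a : X) : Integrable (fun y ↦ f (a, y)) ν := by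
    simpa only [Pi.add_def, sub_add_cancel, g] using (hc' a).integrable.add (integrable_const (g a))
  have abs_g_sub_le (a b : X) : |g a - g b| ≤ c := by
    rw [← integral_sub (integrable_section a) (integrable_section b)]
    simpa using norm_integral_le_of_norm_le_const (μ := ν) (f := fun y ↦ f (a, y) - f (b, y))
      (.of_forall (hc a b))
  have subgaussian : HasSubgaussianMGF (fun p ↦ f p - ∫ a, g a ∂μ) ((c / 2) ^ 2 + c') (μ.prod ν) :=
    hasSubgaussianMGF_prod (hf.sub_const _)
      (hasSubgaussianMGF_of_abs_sub_le measurable_g abs_g_sub_le) fun a ↦ by simpa using hc' a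
  have integrable_f : Integrable f (μ.prod ν) := by
    simpa only [Pi.add_def, sub_add_cancel] using
      subgaussian.integrable.add (integrable_const (∫ a, g a ∂μ))
  rwa [integral_prod f integrable_f]

theorem hasSubgaussianMGF_pi {n : ℕ} {X : Fin n → Type*} [∀ i, MeasurableSpace (X i)]
    {μ : ∀ i, Measure (X i)} [∀ i, IsProbabilityMeasure (μ i)] {f : (∀ i, X i) → ℝ}
    (hf : Measurable f) {c : Fin n → ℝ≥0}
    (hc : ∀ x i a, |f (Function.update x i a) - f x| ≤ c i) :
    HasSubgaussianMGF (fun x ↦ f x - ∫ y, f y ∂Measure.pi μ) (∑ i, (c i / 2) ^ 2)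
      (Measure.pi μ) := by
  induction n with
  | zero =>
    have f_eq (x : ∀ i, X i) : f x = f default := congrArg f (Subsingleton.elim _ _)
    simp only [f_eq]
    simp
  | succ n ih =>
    let e := MeasurableEquiv.piFinSuccAbove X 0
    have he : MeasurePreserving e (Measure.pi μ) ((μ 0).prod (.pi fun j ↦ μ (Fin.succAbove 0 j))) :=
      measurePreserving_piFinSuccAbove μ 0
    have e_symm_apply (a : X 0) (y : ∀ j : Fin n, X (Fin.succAbove 0 j)) :
        e.symm (a, y) = Fin.insertNth 0 a y := rfl
    have subgaussian :=
      hasSubgaussianMGF_prod_sub_integral (μ := μ 0)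
        (ν := .pi fun j ↦ μ (Fin.succAbove 0 j)) (f := f ∘ e.symm) (c := c 0)
        (c' := ∑ j : Fin n, (c (Fin.succAbove 0 j) / 2) ^ 2) (hf.comp e.symm.measurable)
        (fun a b y ↦ ?_) fun a ↦ ih (hf.comp (e.symm.measurable.comp measurable_prodMk_left))
          fun y j b ↦ ?_
    · rw [Fin.sum_univ_succAbove _ 0]
      rw [← he.map_eq] at subgaussian
      simpa only [integral_map_equiv, Function.comp_def, e.symm_apply_apply] using
        subgaussian.of_map e.measurable.aemeasurable
    · simp only [Function.comp_apply, e_symm_apply]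
      rw [← Fin.update_insertNth 0 b a y]
      exact hc _ 0 a
    · simp only [Function.comp_apply, e_symm_apply]
      rw [Fin.insertNth_update]
      exact hc _ _ b

end BoundedDifferences

section Symmetrization

open MeasureTheory

lemma integrable_iSup_of_finite {Ω I : Type*} [MeasurableSpace Ω] {μ : Measure Ω} [Finite I]
    [Nonempty I] {f : I → Ω → ℝ} (hf : ∀ i, Integrable (f i) μ) :
    Integrable (fun x ↦ ⨆ i, f i x) μ := by
  have := Fintype.ofFinite I
  simp only [← Finset.sup'_univ_eq_ciSup, ← Finset.sup'_apply]
  exact Finset.sup'_induction (p := (Integrable · μ)) _ _ (fun _ h₁ _ h₂ ↦ h₁.sup h₂)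
    fun i _ ↦ hf i

lemma iSup_integral_le {Ω I : Type*} [MeasurableSpace Ω] {μ : Measure Ω} [Finite I]
    [Nonempty I] {f : I → Ω → ℝ} (hf : ∀ i, Integrable (f i) μ) :
    ⨆ i, ∫ x, f i x ∂μ ≤ ∫ x, ⨆ i, f i x ∂μ :=
  ciSup_le fun i ↦ integral_mono (hf i) (integrable_iSup_of_finite hf) fun x ↦
    le_ciSup (Finite.bddAbove_range fun i ↦ f i x) i

variable {X ι I : Type*} [MeasurableSpace X] [Fintype ι] {μ : Measure X} [IsProbabilityMeasure μ]

lemma measurePreserving_ite_arrow (p : ι → Prop) [DecidablePred p] :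
    MeasurePreserving (fun (x : (ι → X) × (ι → X)) t ↦ if p t then x.1 t else x.2 t)
      ((Measure.pi fun _ ↦ μ).prod (.pi fun _ ↦ μ)) (.pi fun _ ↦ μ) := by
  have coordinate (t : ι) :
      MeasurePreserving (fun q : X × X ↦ if p t then q.1 else q.2) (μ.prod μ) μ := by
    by_cases h : p t
    · simpa only [h, if_true] using measurePreserving_fst
    · simpa only [h, if_false] using measurePreserving_snd
  exact (measurePreserving_pi _ _ coordinate).comp
    (measurePreserving_arrowProdEquivProdArrow X X ι (fun _ ↦ μ) fun _ ↦ μ).symm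

variable {g : I → X → ℝ}

lemma integral_comp_ite_arrow (p : ι → Prop) [DecidablePred p] {f : (ι → X) → ℝ}
    (hf : Integrable f (.pi fun _ ↦ μ)) :
    ∫ x : (ι → X) × (ι → X), f (fun t ↦ if p t then x.1 t else x.2 t)
      ∂(Measure.pi fun _ ↦ μ).prod (.pi fun _ ↦ μ) = ∫ x, f x ∂.pi fun _ ↦ μ := by
  have hp := measurePreserving_ite_arrow (μ := μ) p
  have := integral_map hp.aemeasurable (hp.map_eq.symm ▸ hf.aestronglyMeasurable)
  rwa [hp.map_eq, eq_comm] at this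

lemma integrable_sum_sub_ghost (hg : ∀ i, Integrable (g i) μ) (i : I) :
    Integrable (fun p : (ι → X) × (ι → X) ↦ ∑ t, (g i (p.2 t) - g i (p.1 t)))
      ((Measure.pi fun _ ↦ μ).prod (.pi fun _ ↦ μ)) :=
  integrable_finsetSum _ fun _ _ ↦ ((integrable_comp_eval (hg i)).comp_snd _).sub
    ((integrable_comp_eval (hg i)).comp_fst _)

variable [Finite I] [Nonempty I]

lemma integrable_iSup_sum_mul (hg : ∀ i, Integrable (g i) μ) (a : ι → ℝ) :
    Integrable (fun x : ι → X ↦ ⨆ i, ∑ t, a t * g i (x t)) (.pi fun _ ↦ μ) :=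
  integrable_iSup_of_finite fun i ↦ integrable_finsetSum _ fun _ _ ↦
    (integrable_comp_eval (hg i)).const_mul _

lemma integral_iSup_sum_integral_sub_le_ghost (hg : ∀ i, Integrable (g i) μ) :
    ∫ x, ⨆ i, ∑ t, (∫ y, g i y ∂μ - g i (x t)) ∂Measure.pi (fun _ : ι ↦ μ) ≤
      ∫ p : (ι → X) × (ι → X), ⨆ i, ∑ t, (g i (p.2 t) - g i (p.1 t))
        ∂(Measure.pi fun _ ↦ μ).prod (.pi fun _ ↦ μ) := by
  have integrable_comp (i : I) (t : ι) :
      Integrable (fun x : ι → X ↦ g i (x t)) (.pi fun _ ↦ μ) :=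
    integrable_comp_eval (hg i)
  have integrable_ghost := integrable_iSup_of_finite (integrable_sum_sub_ghost (ι := ι) hg)
  rw [integral_prod _ integrable_ghost]
  refine integral_mono (integrable_iSup_of_finite fun i ↦ integrable_finsetSum _ fun t _ ↦
    (integrable_const _).sub (integrable_comp i t)) integrable_ghost.integral_prod_left fun x ↦ ?_
  have integral_ghost (i : I) : ∑ t, (∫ y, g i y ∂μ - g i (x t)) =
      ∫ x' : ι → X, ∑ t, (g i (x' t) - g i (x t)) ∂.pi fun _ ↦ μ := by
    rw [integral_finsetSum]
    swap
    · exact fun t _ ↦ (integrable_comp i t).sub (integrable_const _)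
    refine Finset.sum_congr rfl fun t _ ↦ ?_
    rw [integral_sub (integrable_comp i t) (integrable_const _),
      integral_comp_eval (μ := fun _ ↦ μ) (hg i).aestronglyMeasurable]
    simp
  simp only [integral_ghost]
  exact iSup_integral_le fun i ↦ integrable_finsetSum _ fun t _ ↦
    (integrable_comp i t).sub (integrable_const _)

lemma integral_iSup_sum_integral_sub_le_add (hg : ∀ i, Integrable (g i) μ) (ε : ι → ℤˣ) :
    ∫ x, ⨆ i, ∑ t, (∫ y, g i y ∂μ - g i (x t)) ∂Measure.pi (fun _ : ι ↦ μ) ≤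
      ∫ x, ⨆ i, ∑ t, (ε t : ℝ) * g i (x t) ∂Measure.pi (fun _ : ι ↦ μ) +
        ∫ x, ⨆ i, ∑ t, ((-ε) t : ℝ) * g i (x t) ∂Measure.pi (fun _ : ι ↦ μ) := by
  -- Exchanging `x t` with its ghost copy where `ε t = -1` turns the differences into signed sums.
  let G (a : ι → ℤˣ) (x : ι → X) : ℝ := ⨆ i, ∑ t, (a t : ℝ) * g i (x t)
  have integrable_G (a : ι → ℤˣ) : Integrable (G a) (.pi fun _ ↦ μ) := integrable_iSup_sum_mul hg _
  let z (p : (ι → X) × (ι → X)) (t : ι) : X := if ε t = -1 then p.1 t else p.2 t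
  let w (p : (ι → X) × (ι → X)) (t : ι) : X := if ε t = 1 then p.1 t else p.2 t
  have sub_eq (i : I) (p : (ι → X) × (ι → X)) (t : ι) : g i (p.2 t) - g i (p.1 t) =
      (ε t : ℝ) * g i (z p t) + ((-ε) t : ℝ) * g i (w p t) := by
    rcases Int.units_eq_one_or (ε t) with h | h <;> simp [z, w, h] <;> ring
  have iSup_le (p : (ι → X) × (ι → X)) :
      ⨆ i, ∑ t, (g i (p.2 t) - g i (p.1 t)) ≤ G ε (z p) + G (-ε) (w p) := by
    refine ciSup_le fun i ↦ ?_
    simp only [sub_eq, Finset.sum_add_distrib]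
    exact add_le_add (le_ciSup (Finite.bddAbove_range fun i ↦ ∑ t, (ε t : ℝ) * g i (z p t)) i)
      (le_ciSup (Finite.bddAbove_range fun i ↦ ∑ t, ((-ε) t : ℝ) * g i (w p t)) i)
  have integrable_z := (measurePreserving_ite_arrow (μ := μ)
    fun t ↦ ε t = -1).integrable_comp_of_integrable (integrable_G ε)
  have integrable_w := (measurePreserving_ite_arrow (μ := μ)
    fun t ↦ ε t = 1).integrable_comp_of_integrable (integrable_G (-ε))
  calc _ ≤ _ := integral_iSup_sum_integral_sub_le_ghost hg
    _ ≤ ∫ p, G ε (z p) + G (-ε) (w p) ∂(Measure.pi fun _ ↦ μ).prod (.pi fun _ ↦ μ) :=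
        integral_mono (integrable_iSup_of_finite (integrable_sum_sub_ghost hg))
          (integrable_z.add integrable_w) iSup_le
    _ = _ := by
        refine (integral_add integrable_z integrable_w).trans ?_
        exact congrArg₂ (· + ·) (integral_comp_ite_arrow _ (integrable_G ε))
          (integral_comp_ite_arrow _ (integrable_G (-ε)))

lemma integrable_rademacherComplexity [DecidableEq ι] (hg : ∀ i, Integrable (g i) μ) :
    Integrable (fun x : ι → X ↦ rademacherComplexity fun i t ↦ g i (x t)) (.pi fun _ ↦ μ) := by
  simp only [rademacherComplexity, Fintype.expect_eq_sum_div_card]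
  exact (integrable_finsetSum _ fun ε _ ↦ integrable_iSup_sum_mul hg _).div_const _

lemma integral_iSup_sum_integral_sub_le [DecidableEq ι] (hg : ∀ i, Integrable (g i) μ) :
    ∫ x, ⨆ i, ∑ t, (∫ y, g i y ∂μ - g i (x t)) ∂Measure.pi (fun _ : ι ↦ μ) ≤
      2 * ∫ x, rademacherComplexity (fun i t ↦ g i (x t)) ∂Measure.pi (fun _ : ι ↦ μ) := by
  let S (ε : ι → ℤˣ) : ℝ := ∫ x, ⨆ i, ∑ t, (ε t : ℝ) * g i (x t) ∂Measure.pi fun _ : ι ↦ μ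
  have expect_neg : 𝔼 ε, S (-ε) = 𝔼 ε, S ε :=
    Fintype.expect_equiv (Equiv.neg _) _ _ fun _ ↦ rfl
  have integral_rademacherComplexity :
      ∫ x, rademacherComplexity (fun i t ↦ g i (x t)) ∂Measure.pi (fun _ : ι ↦ μ) = 𝔼 ε, S ε := by
    simp only [rademacherComplexity, Fintype.expect_eq_sum_div_card, S]
    rw [integral_div, integral_finsetSum _ fun ε _ ↦ integrable_iSup_sum_mul hg _]
  rw [integral_rademacherComplexity, two_mul]
  nth_rw 2 [← expect_neg]
  rw [← Finset.expect_add_distrib]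
  exact Finset.le_expect Finset.univ_nonempty fun ε _ ↦
    integral_iSup_sum_integral_sub_le_add hg ε

end Symmetrization

section UniformDeviation

open MeasureTheory ProbabilityTheory
open scoped NNReal

variable {X I : Type*} [Finite I] [Nonempty I] {g : I → X → ℝ} {c : ℝ≥0}

lemma abs_iSup_sum_update_sub_le {ι : Type*} [Fintype ι] [DecidableEq ι]
    (hc : ∀ i a b, |g i a - g i b| ≤ c) (m : I → ℝ) (x : ι → X) (t : ι) (a : X) :
    |(⨆ i, ∑ s, (m i - g i (Function.update x t a s))) - ⨆ i, ∑ s, (m i - g i (x s))| ≤ c := by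
  have sum_update_le (y : ι → X) (b : X) (i : I) :
      ∑ s, (m i - g i (Function.update y t b s)) ≤ ∑ s, (m i - g i (y s)) + c := by
    rw [← Finset.add_sum_erase _ _ (Finset.mem_univ t),
      ← Finset.add_sum_erase _ (fun s ↦ m i - g i (y s)) (Finset.mem_univ t),
      Function.update_self, Finset.sum_congr rfl fun s hs ↦ by
        rw [Function.update_of_ne (Finset.ne_of_mem_erase hs)]]
    linarith [(abs_le.1 (hc i (y t) b)).2]
  have iSup_update_le (y : ι → X) (b : X) : ⨆ i, ∑ s, (m i - g i (Function.update y t b s)) ≤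
      (⨆ i, ∑ s, (m i - g i (y s))) + c :=
    ciSup_le fun i ↦ (sum_update_le y b i).trans <| by
      gcongr
      exact le_ciSup (Finite.bddAbove_range fun i ↦ ∑ s, (m i - g i (y s))) i
  refine abs_sub_le_iff.2 ⟨sub_le_iff_le_add'.2 (iSup_update_le x a), sub_le_iff_le_add'.2 ?_⟩
  simpa using iSup_update_le (Function.update x t a) (x t)

variable [MeasurableSpace X] {μ : Measure X} [IsProbabilityMeasure μ]

lemma integrable_of_abs_sub_le {f : X → ℝ}
    (hf : Measurable f) (hc : ∀ a b, |f a - f b| ≤ c) : Integrable f μ := by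
  simpa only [Pi.add_def, sub_add_cancel] using
    (hasSubgaussianMGF_of_abs_sub_le hf hc).integrable.add (integrable_const (μ := μ) (∫ y, f y ∂μ))

theorem measureReal_exists_le_sum_integral_sub_le {n : ℕ}
    (hg : ∀ i, Measurable (g i)) (hc : ∀ i a b, |g i a - g i b| ≤ c) {ρ s : ℝ}
    (hρ : ∀ x : Fin n → X, rademacherComplexity (fun i t ↦ g i (x t)) ≤ ρ) (hs : 0 ≤ s) :
    (Measure.pi fun _ : Fin n ↦ μ).real
        {x | ∃ i, 2 * ρ + s ≤ ∑ t, (∫ y, g i y ∂μ - g i (x t))} ≤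
      Real.exp (-2 * s ^ 2 / (n * c ^ 2)) := by
  let T (x : Fin n → X) : ℝ := ⨆ i, ∑ t, (∫ y, g i y ∂μ - g i (x t))
  have measurable_T : Measurable T := by fun_prop
  have integrable_g (i : I) : Integrable (g i) μ := integrable_of_abs_sub_le (hg i) (hc i)
  have integral_T_le : ∫ x, T x ∂Measure.pi (fun _ ↦ μ) ≤ 2 * ρ := by
    refine (integral_iSup_sum_integral_sub_le integrable_g).trans ?_
    gcongr
    simpa using integral_mono (integrable_rademacherComplexity integrable_g)
      (integrable_const ρ) hρ
  have subgaussian := hasSubgaussianMGF_pi (μ := fun _ : Fin n ↦ μ) measurable_T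
    (abs_iSup_sum_update_sub_le hc _)
  calc _ ≤ (Measure.pi fun _ : Fin n ↦ μ).real {x | s ≤ T x - ∫ x, T x ∂Measure.pi fun _ ↦ μ} := by
        refine measureReal_mono fun x hx ↦ ?_
        obtain ⟨i, hi⟩ := hx
        have := le_ciSup (Finite.bddAbove_range fun i ↦ ∑ t, (∫ y, g i y ∂μ - g i (x t))) i
        simp only [Set.mem_ofPred_eq, T] at *
        linarith
    _ ≤ _ := subgaussian.measure_ge_le hs
    _ = Real.exp (-2 * s ^ 2 / (n * c ^ 2)) := by
        congr 1
        simp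
        field_simp

end UniformDeviation

section BinaryRelativeEntropy

/-- The relative entropy (Kullback–Leibler divergence) of the Bernoulli distribution with parameter
`p` with respect to the one with parameter `q`. -/
noncomputable def binaryRelEntropy (p q : ℝ) : ℝ :=
  p * Real.log (p / q) + (1 - p) * Real.log ((1 - p) / (1 - q))

lemma two_mul_sub_sqrt_mul_sqrt_le {p q : ℝ} (hp : 0 < p) (hq : 0 < q) :
    2 * (p - √p * √q) ≤ p * Real.log (p / q) := by
  have log_le : Real.log (q / p) ≤ 2 * (√(q / p) - 1) := by
    have := Real.log_le_sub_one_of_pos (Real.sqrt_pos.2 (div_pos hq hp))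
    rw [Real.log_sqrt (by positivity)] at this
    linarith
  have sqrt_eq : p * √(q / p) = √p * √q := by
    rw [Real.sqrt_div hq.le, mul_div_assoc', mul_div_right_comm, Real.div_sqrt]
  rw [← inv_div, Real.log_inv]
  nlinarith

lemma two_mul_one_sub_cos_arcsin_sqrt_sub_le {p q : ℝ} (hp : p ∈ Set.Ioo 0 1)
    (hq : q ∈ Set.Ioo 0 1) :
    2 * (1 - Real.cos (Real.arcsin √p - Real.arcsin √q)) ≤ binaryRelEntropy p q := by
  have cos_arcsin_sqrt {r : ℝ} (hr : r ∈ Set.Ioo 0 1) : Real.cos (Real.arcsin √r) = √(1 - r) := by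
    rw [Real.cos_arcsin, Real.sq_sqrt hr.1.le]
  have sin_arcsin_sqrt {r : ℝ} (hr : r ∈ Set.Ioo 0 1) : Real.sin (Real.arcsin √r) = √r :=
    Real.sin_arcsin (by linarith [Real.sqrt_nonneg r]) (Real.sqrt_le_one.2 hr.2.le)
  rw [Real.cos_sub, cos_arcsin_sqrt hp, cos_arcsin_sqrt hq, sin_arcsin_sqrt hp, sin_arcsin_sqrt hq,
    binaryRelEntropy]
  linarith [two_mul_sub_sqrt_mul_sqrt_le hp.1 hq.1,
    two_mul_sub_sqrt_mul_sqrt_le (sub_pos.2 hp.2) (sub_pos.2 hq.2)]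

lemma four_mul_sq_arcsin_sqrt_sub_le {p q : ℝ} (hp : p ∈ Set.Ioo 0 1) (hq : q ∈ Set.Ioo 0 1) :
    4 * (Real.arcsin √p - Real.arcsin √q) ^ 2 ≤ Real.pi ^ 2 * binaryRelEntropy p q := by
  have abs_sub_le : |Real.arcsin √p - Real.arcsin √q| ≤ Real.pi := by
    rw [abs_le]
    constructor <;>
      linarith [Real.arcsin_le_pi_div_two √p, Real.arcsin_le_pi_div_two √q,
        Real.neg_pi_div_two_le_arcsin √p, Real.neg_pi_div_two_le_arcsin √q]
  calc 4 * (Real.arcsin √p - Real.arcsin √q) ^ 2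
      = Real.pi ^ 2 * (2 * (2 / Real.pi ^ 2 * (Real.arcsin √p - Real.arcsin √q) ^ 2)) := by
        field_simp
        ring
    _ ≤ Real.pi ^ 2 * binaryRelEntropy p q := by
        gcongr
        linarith [Real.cos_le_one_sub_mul_cos_sq abs_sub_le,
          two_mul_one_sub_cos_arcsin_sqrt_sub_le hp hq]

lemma hasDerivAt_arcsin_sqrt {F : ℝ → ℝ} {F' x : ℝ} (hF : HasDerivAt F F' x)
    (hx : F x ∈ Set.Ioo 0 1) :
    HasDerivAt (fun y ↦ Real.arcsin √(F y)) (F' / (2 * √(F x * (1 - F x)))) x := by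
  have sqrt_pos : 0 < √(F x) := Real.sqrt_pos.2 hx.1
  have sqrt_lt_one : √(F x) < 1 := by
    rw [Real.sqrt_lt' one_pos, one_pow]
    exact hx.2
  refine ((Real.hasDerivAt_arcsin (by linarith) sqrt_lt_one.ne).comp x
    (hF.sqrt hx.1.ne')).congr_deriv ?_
  rw [Real.sq_sqrt hx.1.le, Real.sqrt_mul hx.1.le]
  field_simp

/-- `x ↦ arcsin √(F x)` is the variance-stabilising transformation of the Bernoulli model. -/
lemma sq_sub_le_mul_sq_arcsin_sqrt_sub {F : ℝ → ℝ} {s : Set ℝ} {β a b : ℝ} (hs : s.OrdConnected)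
    (hF : ∀ x ∈ s, DifferentiableAt ℝ F x) (hF01 : ∀ x ∈ s, F x ∈ Set.Ioo 0 1)
    (hF' : ∀ x ∈ s, deriv F x ≠ 0) (hβ : ∀ x ∈ s, F x * (1 - F x) / deriv F x ^ 2 ≤ β)
    (ha : a ∈ s) (hb : b ∈ s) :
    (a - b) ^ 2 ≤ β * (4 * (Real.arcsin √(F a) - Real.arcsin √(F b)) ^ 2) := by
  wlog hab : a < b generalizing a b
  · rcases (not_lt.1 hab).eq_or_lt with rfl | hba
    · simp
    · linarith [this hb ha hba]
  have hasDerivAt (x : ℝ) (hx : x ∈ s) := hasDerivAt_arcsin_sqrt (hF x hx).hasDerivAt (hF01 x hx)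
  obtain ⟨c, hc, slope⟩ := exists_hasDerivAt_eq_slope _ _ hab
    (fun x hx ↦ (hasDerivAt x (hs.out ha hb hx)).continuousAt.continuousWithinAt)
    fun x hx ↦ hasDerivAt x (hs.out ha hb (Set.Ioo_subset_Icc_self hx))
  have hcs : c ∈ s := hs.out ha hb (Set.Ioo_subset_Icc_self hc)
  have variance_pos : 0 < F c * (1 - F c) := mul_pos (hF01 c hcs).1 (sub_pos.2 (hF01 c hcs).2)
  have deriv_ne_zero := hF' c hcs
  calc (a - b) ^ 2 = F c * (1 - F c) / deriv F c ^ 2 *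
        (4 * (Real.arcsin √(F a) - Real.arcsin √(F b)) ^ 2) := by
        rw [eq_div_iff (sub_pos.2 hab).ne'] at slope
        rw [← neg_sub, neg_sq, ← neg_sub (Real.arcsin √(F b)), neg_sq, ← slope, mul_pow, div_pow,
          mul_pow, Real.sq_sqrt variance_pos.le]
        have F_ne_zero := (hF01 c hcs).1.ne'
        have one_sub_ne_zero := (sub_pos.2 (hF01 c hcs).2).ne'
        field_simp
        ring
    _ ≤ _ := by
        gcongr
        exact hβ c hcs

theorem sq_sub_le_mul_binaryRelEntropy {F : ℝ → ℝ} {s : Set ℝ} {β a b : ℝ} (hs : s.OrdConnected)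
    (hF : ∀ x ∈ s, DifferentiableAt ℝ F x) (hF01 : ∀ x ∈ s, F x ∈ Set.Ioo 0 1)
    (hF' : ∀ x ∈ s, deriv F x ≠ 0) (hβ : ∀ x ∈ s, F x * (1 - F x) / deriv F x ^ 2 ≤ β)
    (ha : a ∈ s) (hb : b ∈ s) :
    (a - b) ^ 2 ≤ Real.pi ^ 2 * β * binaryRelEntropy (F a) (F b) := by
  have β_nonneg : 0 ≤ β := le_trans (div_nonneg (mul_nonneg (hF01 a ha).1.le
    (sub_nonneg.2 (hF01 a ha).2.le)) (sq_nonneg _)) (hβ a ha)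
  calc (a - b) ^ 2 ≤ β * (4 * (Real.arcsin √(F a) - Real.arcsin √(F b)) ^ 2) :=
        sq_sub_le_mul_sq_arcsin_sqrt_sub hs hF hF01 hF' hβ ha hb
    _ ≤ β * (Real.pi ^ 2 * binaryRelEntropy (F a) (F b)) := by
        gcongr β * ?_
        exact four_mul_sq_arcsin_sqrt_sub_le (hF01 a ha) (hF01 b hb)
    _ = Real.pi ^ 2 * β * binaryRelEntropy (F a) (F b) := by ring

end BinaryRelativeEntropy

section LogLoss

/-- The negative log-likelihood of the parameter `x` for a single observed sign `y`, which is `true`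
with probability `F x`. -/
noncomputable def logLoss (F : ℝ → ℝ) (y : Bool) (x : ℝ) : ℝ :=
  if y then Real.log (1 / F x) else Real.log (1 / (1 - F x))

variable {F : ℝ → ℝ}

lemma binaryRelEntropy_eq_logLoss {a b : ℝ} (ha : F a ∈ Set.Ioo 0 1) (hb : F b ∈ Set.Ioo 0 1) :
    binaryRelEntropy (F a) (F b) = F a * (logLoss F true b - logLoss F true a) +
      (1 - F a) * (logLoss F false b - logLoss F false a) := by
  rw [binaryRelEntropy, Real.log_div ha.1.ne' hb.1.ne',
    Real.log_div (sub_pos.2 ha.2).ne' (sub_pos.2 hb.2).ne']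
  simp [logLoss]
  ring

lemma logLoss_mem_Icc {x U : ℝ} (hx : F x ∈ Set.Ioo 0 1)
    (hU : Real.log (1 / (F x * (1 - F x))) ≤ U) (y : Bool) : logLoss F y x ∈ Set.Icc 0 U := by
  rw [one_div, Real.log_inv, Real.log_mul hx.1.ne' (sub_pos.2 hx.2).ne'] at hU
  have log_neg := Real.log_neg hx.1 hx.2
  have log_one_sub_neg := Real.log_neg (sub_pos.2 hx.2) (sub_lt_self 1 hx.1)
  cases y <;> simp only [logLoss, if_true, Bool.false_eq_true, if_false, one_div, Real.log_inv] <;>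
    constructor <;> linarith

lemma abs_logLoss_sub_le {s : Set ℝ} {L a b : ℝ} (hs : s.OrdConnected)
    (hF : ∀ x ∈ s, DifferentiableAt ℝ F x) (hF01 : ∀ x ∈ s, F x ∈ Set.Ioo 0 1)
    (hL : ∀ x ∈ s, |deriv F x| / (F x * (1 - F x)) ≤ L) (y : Bool) (ha : a ∈ s) (hb : b ∈ s) :
    |logLoss F y a - logLoss F y b| ≤ L * |a - b| := by
  have hasDerivAt (x : ℝ) (hx : x ∈ s) : HasDerivAt (logLoss F y)
      (if y then -(deriv F x / F x) else deriv F x / (1 - F x)) x := by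
    unfold logLoss
    cases y
    · simpa [neg_div] using
        (((hF x hx).hasDerivAt.const_sub 1).log (sub_pos.2 (hF01 x hx).2).ne').fun_neg
    · simpa using ((hF x hx).hasDerivAt.log (hF01 x hx).1.ne').fun_neg
  refine hs.convex.norm_image_sub_le_of_norm_hasDerivWithin_le
    (fun x hx ↦ (hasDerivAt x hx).hasDerivWithinAt) (fun x hx ↦ ?_) hb ha
  have F_pos := (hF01 x hx).1
  have one_sub_pos := sub_pos.2 (hF01 x hx).2
  refine le_trans ?_ (hL x hx)
  rw [Real.norm_eq_abs]
  split_ifs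
  · rw [abs_neg, abs_div, abs_of_pos F_pos]
    gcongr
    exact mul_le_of_le_one_right F_pos.le (by linarith)
  · rw [abs_div, abs_of_pos one_sub_pos]
    gcongr
    exact mul_le_of_le_one_left one_sub_pos.le (by linarith)

end LogLoss

section WeightMeasure

open MeasureTheory

variable {Ω : Type*} [Fintype Ω] [MeasurableSpace Ω]

/-- The measure on a finite type whose mass at the point `x` is `w x`, for nonnegative weights
`w`. -/
noncomputable def weightMeasure (w : Ω → ℝ) : Measure Ω :=
  ∑ x, ENNReal.ofReal (w x) • Measure.dirac x

instance weightMeasure.isFiniteMeasure {w : Ω → ℝ} : IsFiniteMeasure (weightMeasure w) :=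
  ⟨by simp [weightMeasure]⟩

lemma isProbabilityMeasure_weightMeasure {w : Ω → ℝ} (hw : ∀ x, 0 ≤ w x) (hsum : ∑ x, w x = 1) :
    IsProbabilityMeasure (weightMeasure w) := by
  constructor
  simp [weightMeasure, ← ENNReal.ofReal_sum_of_nonneg fun x _ ↦ hw x, hsum]

variable [MeasurableSingletonClass Ω]

lemma measureReal_weightMeasure_singleton {w : Ω → ℝ} (hw : ∀ x, 0 ≤ w x) (x : Ω) :
    (weightMeasure w).real {x} = w x := by
  classical
  simp [Measure.real, weightMeasure, Set.indicator_apply, hw]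

lemma integral_weightMeasure {w : Ω → ℝ} (hw : ∀ x, 0 ≤ w x) (f : Ω → ℝ) :
    ∫ x, f x ∂weightMeasure w = ∑ x, w x * f x := by
  rw [integral_fintype .of_finite]
  simp only [measureReal_weightMeasure_singleton hw, smul_eq_mul]

lemma measureReal_pi_weightMeasure {ι : Type*} [Fintype ι] [DecidableEq ι] {w : Ω → ℝ}
    (hw : ∀ x, 0 ≤ w x) (E : Set (ι → Ω)) :
    (Measure.pi fun _ ↦ weightMeasure w).real E = ∑ x, E.indicator (fun x ↦ ∏ t, w (x t)) x := by
  classical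
  have singleton (x : ι → Ω) : (Measure.pi fun _ ↦ weightMeasure w).real {x} = ∏ t, w (x t) := by
    simp only [Measure.real, Measure.pi_singleton, ENNReal.toReal_prod]
    exact Finset.prod_congr rfl fun t _ ↦ measureReal_weightMeasure_singleton hw (x t)
  simp only [Set.indicator_apply, ← singleton, ← Finset.sum_filter]
  rw [sum_measureReal_singleton]
  simp

end WeightMeasure

section OneBitMatrixCompletion

open MeasureTheory

/-- Condition U on the link function `F` over the set `s` of parameters, with upper bounds `L`, `β`
and `U` in place of the suprema `L_α`, `β_α` and `U_α`. -/
structure ConditionU (F : ℝ → ℝ) (s : Set ℝ) (L β U : ℝ) : Prop where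
  differentiableAt : ∀ x ∈ s, DifferentiableAt ℝ F x
  mem_Ioo : ∀ x ∈ s, F x ∈ Set.Ioo 0 1
  deriv_ne_zero : ∀ x ∈ s, deriv F x ≠ 0
  abs_deriv_div_le : ∀ x ∈ s, |deriv F x| / (F x * (1 - F x)) ≤ L
  div_deriv_sq_le : ∀ x ∈ s, F x * (1 - F x) / deriv F x ^ 2 ≤ β
  log_le : ∀ x ∈ s, Real.log (1 / (F x * (1 - F x))) ≤ U

namespace ConditionU

variable {F : ℝ → ℝ} {s : Set ℝ} {L β U : ℝ} (hF : ConditionU F s L β U)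
include hF

lemma mul_one_sub_pos {x : ℝ} (hx : x ∈ s) : 0 < F x * (1 - F x) :=
  mul_pos (hF.mem_Ioo x hx).1 (sub_pos.2 (hF.mem_Ioo x hx).2)

lemma nonneg_of_abs_deriv_div_le (hs : s.Nonempty) : 0 ≤ L :=
  let ⟨x, hx⟩ := hs
  (div_nonneg (abs_nonneg _) (hF.mul_one_sub_pos hx).le).trans (hF.abs_deriv_div_le x hx)

lemma nonneg_of_div_deriv_sq_le (hs : s.Nonempty) : 0 ≤ β :=
  let ⟨x, hx⟩ := hs
  (div_nonneg (hF.mul_one_sub_pos hx).le (sq_nonneg _)).trans (hF.div_deriv_sq_le x hx)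

lemma pos_of_log_le (hs : s.Nonempty) : 0 < U := by
  obtain ⟨x, hx⟩ := hs
  refine (Real.log_pos ((one_lt_div (hF.mul_one_sub_pos hx)).2 ?_)).trans_le (hF.log_le x hx)
  nlinarith [sq_nonneg (F x - 1 / 2)]

end ConditionU

variable {d1 d2 : ℕ}

/-- The constraint set `K_max(α, R)`. -/
def maxNormBall (d1 d2 : ℕ) (α R : ℝ) : Set (Matrix (Fin d1) (Fin d2) ℝ) :=
  {M | linfNorm M ≤ α ∧ maxNorm M ≤ R}

lemma entry_mem_Icc_of_linfNorm_le {M : Matrix (Fin d1) (Fin d2) ℝ} {α : ℝ}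
    (hM : linfNorm M ≤ α) (k : Fin d1) (l : Fin d2) : M k l ∈ Set.Icc (-α) α := by
  refine abs_le.1 (le_trans ?_ hM)
  exact (le_ciSup (Finite.bddAbove_range fun l ↦ |M k l|) l).trans
    (le_ciSup (Finite.bddAbove_range fun k ↦ ⨆ l, |M k l|) k)

/-- The probability of observing the sign `x.2` at the index pair `x.1` in a single draw. -/
noncomputable def observationWeight (F : ℝ → ℝ) (π : Fin d1 → Fin d2 → ℝ)
    (Mstar : Matrix (Fin d1) (Fin d2) ℝ) (x : (Fin d1 × Fin d2) × Bool) : ℝ :=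
  π x.1.1 x.1.2 * if x.2 then F (Mstar x.1.1 x.1.2) else 1 - F (Mstar x.1.1 x.1.2)

/-- The excess loss of `M` over `Mstar` on a single observation. -/
noncomputable def excessLoss (F : ℝ → ℝ) (Mstar M : Matrix (Fin d1) (Fin d2) ℝ)
    (x : (Fin d1 × Fin d2) × Bool) : ℝ :=
  logLoss F x.2 (M x.1.1 x.1.2) - logLoss F x.2 (Mstar x.1.1 x.1.2)

variable {F : ℝ → ℝ} {π : Fin d1 → Fin d2 → ℝ} {Mstar : Matrix (Fin d1) (Fin d2) ℝ}

lemma observationWeight_nonneg (hF : ∀ k l, F (Mstar k l) ∈ Set.Ioo 0 1) (hπ : ∀ k l, 0 ≤ π k l)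
    (x : (Fin d1 × Fin d2) × Bool) : 0 ≤ observationWeight F π Mstar x := by
  obtain ⟨F_pos, F_lt_one⟩ := hF x.1.1 x.1.2
  refine mul_nonneg (hπ _ _) ?_
  split_ifs <;> linarith

lemma sum_observationWeight_mul (f : (Fin d1 × Fin d2) × Bool → ℝ) :
    ∑ x, observationWeight F π Mstar x * f x = ∑ k, ∑ l, π k l *
      (F (Mstar k l) * f ((k, l), true) + (1 - F (Mstar k l)) * f ((k, l), false)) := by
  simp only [Fintype.sum_prod_type, Fintype.sum_bool, observationWeight, if_true,
    Bool.false_eq_true, if_false, mul_add, mul_assoc]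

lemma sum_observationWeight (hπ : ∑ k, ∑ l, π k l = 1) :
    ∑ x, observationWeight F π Mstar x = 1 := by
  simpa [hπ] using sum_observationWeight_mul (F := F) (π := π) (Mstar := Mstar) fun _ ↦ 1

lemma sum_sum_indicator_sampleWeight {n : ℕ} (hF : ∀ k l, F (Mstar k l) ∈ Set.Ioo 0 1)
    (hπ : ∀ k l, 0 ≤ π k l) (E : Set ((Fin n → Fin d1 × Fin d2) × (Fin n → Bool))) :
    ∑ S, ∑ y, E.indicator (fun p ↦ sampleWeight F π Mstar p.1 p.2) (S, y) =
      (Measure.pi fun _ : Fin n ↦ weightMeasure (observationWeight F π Mstar)).real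
        {x | (Prod.fst ∘ x, Prod.snd ∘ x) ∈ E} := by
  rw [measureReal_pi_weightMeasure (observationWeight_nonneg hF hπ), ← Fintype.sum_prod_type',
    ← Equiv.sum_comp (Equiv.arrowProdEquivProdArrow (Fin n) (fun _ ↦ Fin d1 × Fin d2)
      fun _ ↦ Bool)]
  rfl

lemma integral_excessLoss (hF : ∀ k l, F (Mstar k l) ∈ Set.Ioo 0 1) (hπ : ∀ k l, 0 ≤ π k l)
    {M : Matrix (Fin d1) (Fin d2) ℝ} (hM : ∀ k l, F (M k l) ∈ Set.Ioo 0 1) :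
    ∫ x, excessLoss F Mstar M x ∂weightMeasure (observationWeight F π Mstar) =
      ∑ k, ∑ l, π k l * binaryRelEntropy (F (Mstar k l)) (F (M k l)) := by
  rw [integral_weightMeasure (observationWeight_nonneg hF hπ), sum_observationWeight_mul]
  simp only [binaryRelEntropy_eq_logLoss (hF _ _) (hM _ _), excessLoss]

variable {α R L β U : ℝ} (hF : ConditionU F (Set.Icc (-α) α) L β U)
include hF

lemma sum_mul_sq_sub_le_integral_excessLoss (hπ : ∀ k l, 0 ≤ π k l) (hMstar : linfNorm Mstar ≤ α)
    {M : Matrix (Fin d1) (Fin d2) ℝ} (hM : linfNorm M ≤ α) :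
    ∑ k, ∑ l, π k l * (M k l - Mstar k l) ^ 2 ≤ Real.pi ^ 2 * β *
      ∫ x, excessLoss F Mstar M x ∂weightMeasure (observationWeight F π Mstar) := by
  have hMstar_mem := entry_mem_Icc_of_linfNorm_le hMstar
  have hM_mem := entry_mem_Icc_of_linfNorm_le hM
  rw [integral_excessLoss (fun k l ↦ hF.mem_Ioo _ (hMstar_mem k l)) hπ
    fun k l ↦ hF.mem_Ioo _ (hM_mem k l)]
  simp only [Finset.mul_sum, mul_left_comm _ (π _ _)]
  gcongr with k _ l _
  · exact hπ k l
  · rw [← neg_sub, neg_sq]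
    exact sq_sub_le_mul_binaryRelEntropy Set.ordConnected_Icc hF.differentiableAt hF.mem_Ioo
      hF.deriv_ne_zero hF.div_deriv_sq_le (hMstar_mem k l) (hM_mem k l)

lemma abs_excessLoss_sub_le (hMstar : linfNorm Mstar ≤ α) {M : Matrix (Fin d1) (Fin d2) ℝ}
    (hM : linfNorm M ≤ α) (x y : (Fin d1 × Fin d2) × Bool) :
    |excessLoss F Mstar M x - excessLoss F Mstar M y| ≤ 2 * U := by
  have mem_Icc {N : Matrix (Fin d1) (Fin d2) ℝ} (hN : linfNorm N ≤ α)
      (z : (Fin d1 × Fin d2) × Bool) : logLoss F z.2 (N z.1.1 z.1.2) ∈ Set.Icc 0 U :=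
    have h := entry_mem_Icc_of_linfNorm_le hN z.1.1 z.1.2
    logLoss_mem_Icc (hF.mem_Ioo _ h) (hF.log_le _ h) _
  obtain ⟨⟨_, _⟩, ⟨_, _⟩⟩ := And.intro (mem_Icc hM x) (mem_Icc hM y)
  obtain ⟨⟨_, _⟩, ⟨_, _⟩⟩ := And.intro (mem_Icc hMstar x) (mem_Icc hMstar y)
  simp only [excessLoss]
  rw [abs_le]
  constructor <;> linarith

lemma rademacherComplexity_excessLoss_le {I ι : Type*} [Finite I] [Nonempty I] [Fintype ι]
    [DecidableEq ι] (hL : 0 ≤ L) {M : I → Matrix (Fin d1) (Fin d2) ℝ}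
    (hM : ∀ i, M i ∈ maxNormBall d1 d2 α R) (x : ι → (Fin d1 × Fin d2) × Bool) :
    rademacherComplexity (fun i t ↦ excessLoss F Mstar (M i) (x t)) ≤
      16 * L * R * √(Fintype.card ι * (d1 + d2)) := by
  calc rademacherComplexity (fun i t ↦ excessLoss F Mstar (M i) (x t))
      ≤ rademacherComplexity fun i t ↦ L * M i (x t).1.1 (x t).1.2 := by
        refine rademacherComplexity_le_of_abs_sub_le fun i j t ↦ ?_
        rw [excessLoss, excessLoss, sub_sub_sub_cancel_right, ← mul_sub, abs_mul, abs_of_nonneg hL]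
        exact abs_logLoss_sub_le Set.ordConnected_Icc hF.differentiableAt hF.mem_Ioo
          hF.abs_deriv_div_le _ (entry_mem_Icc_of_linfNorm_le (hM i).1 _ _)
          (entry_mem_Icc_of_linfNorm_le (hM j).1 _ _)
    _ ≤ L * (16 * R * √(Fintype.card ι * (d1 + d2))) := by
        rw [rademacherComplexity_const_mul hL]
        gcongr
        exact rademacherComplexity_maxNorm_ball_le (fun i ↦ (hM i).2) fun t ↦ (x t).1
    _ = 16 * L * R * √(Fintype.card ι * (d1 + d2)) := by ring

end OneBitMatrixCompletion

section GeneralizationBound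

open MeasureTheory

variable {d1 d2 n : ℕ} {F : ℝ → ℝ} {π : Fin d1 → Fin d2 → ℝ} {Mstar : Matrix (Fin d1) (Fin d2) ℝ}

lemma sum_excessLoss {M : Matrix (Fin d1) (Fin d2) ℝ} (x : Fin n → (Fin d1 × Fin d2) × Bool) :
    ∑ t, excessLoss F Mstar M (x t) = negLogLik F (Prod.fst ∘ x) (Prod.snd ∘ x) M -
      negLogLik F (Prod.fst ∘ x) (Prod.snd ∘ x) Mstar :=
  Finset.sum_sub_distrib _ _

lemma mul_sqrt_div {m : ℝ} (hm : 0 < m) (a : ℝ) : m * √(a / m) = √(m * a) := by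
  rw [show m * a = m ^ 2 * (a / m) by field_simp, Real.sqrt_mul (sq_nonneg m), Real.sqrt_sq hm.le]

variable {α R L β U δ : ℝ} (hF : ConditionU F (Set.Icc (-α) α) L β U)
include hF

lemma one_sub_le_measureReal_integral_excessLoss_le {I : Type*} [Finite I] [Nonempty I]
    [IsProbabilityMeasure (weightMeasure (observationWeight F π Mstar))] (hn : 0 < n)
    (hα : (Set.Icc (-α) α).Nonempty) (hMstar : linfNorm Mstar ≤ α) (hδ : 0 < δ)
    {M : I → Matrix (Fin d1) (Fin d2) ℝ} (hM : ∀ i, M i ∈ maxNormBall d1 d2 α R) :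
    1 - δ ≤ (Measure.pi fun _ : Fin n ↦ weightMeasure (observationWeight F π Mstar)).real
      {x | ∀ i, ∫ y, excessLoss F Mstar (M i) y ∂weightMeasure (observationWeight F π Mstar) ≤
        (∑ t, excessLoss F Mstar (M i) (x t)) / n + (32 * L * R * √((d1 + d2) / n) +
          U * √(2 * Real.log (1 / δ) / n))} := by
  have n_pos : (0 : ℝ) < n := Nat.cast_pos.2 hn
  have U_pos : 0 < U := hF.pos_of_log_le hα
  set μ := weightMeasure (observationWeight F π Mstar)
  let ρ : ℝ := 16 * L * R * √(n * (d1 + d2))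
  let s : ℝ := U * √(n * (2 * Real.log (1 / δ)))
  let deviation : Set (Fin n → (Fin d1 × Fin d2) × Bool) := {x | ∃ i, 2 * ρ + s ≤
    ∑ t, (∫ y, excessLoss F Mstar (M i) y ∂μ - excessLoss F Mstar (M i) (x t))}
  have deviation_le : (Measure.pi fun _ ↦ μ).real deviation ≤ δ := by
    have hρ (x : Fin n → (Fin d1 × Fin d2) × Bool) :
        rademacherComplexity (fun i t ↦ excessLoss F Mstar (M i) (x t)) ≤ ρ := by
      simpa only [Fintype.card_fin] using
        rademacherComplexity_excessLoss_le hF (hF.nonneg_of_abs_deriv_div_le hα) hM x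
    calc _ ≤ Real.exp (-2 * s ^ 2 / (n * (2 * U) ^ 2)) :=
          measureReal_exists_le_sum_integral_sub_le (c := ⟨2 * U, by positivity⟩)
            (fun _ ↦ .of_discrete) (fun i ↦ abs_excessLoss_sub_le hF hMstar (hM i).1) hρ
            (by positivity)
      _ ≤ Real.exp (-Real.log (1 / δ)) := by
          gcongr
          rw [mul_pow, Real.sq_sqrt']
          have := le_max_left (n * (2 * Real.log (1 / δ))) 0
          rw [div_le_iff₀ (by positivity)]
          nlinarith [sq_nonneg U]
      _ = δ := by rw [one_div, Real.log_inv, neg_neg, Real.exp_log hδ]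
  calc 1 - δ ≤ 1 - (Measure.pi fun _ ↦ μ).real deviation := sub_le_sub_left deviation_le 1
    _ = (Measure.pi fun _ ↦ μ).real deviationᶜ :=
        (probReal_compl_eq_one_sub .of_discrete).symm
    _ ≤ _ := by
        refine measureReal_mono fun x hx i ↦ ?_
        have lt := not_le.1 (not_exists.1 hx i)
        rw [div_add' _ _ _ n_pos.ne', le_div_iff₀' n_pos]
        rw [Finset.sum_sub_distrib, Finset.sum_const, Finset.card_univ, Fintype.card_fin,
          nsmul_eq_mul] at lt
        simp only [ρ, s, ← mul_sqrt_div n_pos] at lt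
        linarith

theorem maxNorm_MLE_upper_bound_general
    {Mhat : (Fin n → Fin d1 × Fin d2) → (Fin n → Bool) → Matrix (Fin d1) (Fin d2) ℝ}
    (hn : 0 < n) (hMstar : linfNorm Mstar ≤ α) (hπ : ∀ k l, 0 ≤ π k l)
    (hπ_sum : ∑ k, ∑ l, π k l = 1) (hδ : 0 < δ)
    (hMhat : ∀ S y, Mhat S y ∈ maxNormBall d1 d2 α R)
    (hMhat_le : ∀ S y, negLogLik F S y (Mhat S y) ≤ negLogLik F S y Mstar) :
    1 - δ ≤ ∑ S : Fin n → Fin d1 × Fin d2, ∑ y : Fin n → Bool,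
      Set.indicator {p : (Fin n → Fin d1 × Fin d2) × (Fin n → Bool) |
        ∑ k, ∑ l, π k l * (Mhat p.1 p.2 k l - Mstar k l) ^ 2 ≤ 32 * Real.pi ^ 2 * β *
          (L * R * √((d1 + d2) / n) + U * √(Real.log (4 / δ) / n))}
        (fun p ↦ sampleWeight F π Mstar p.1 p.2) (S, y) := by
  have hF_Mstar (k : Fin d1) (l : Fin d2) := hF.mem_Ioo _ (entry_mem_Icc_of_linfNorm_le hMstar k l)
  have := isProbabilityMeasure_weightMeasure (observationWeight_nonneg hF_Mstar hπ)
    (sum_observationWeight hπ_sum)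
  obtain ⟨kl, b⟩ := nonempty_of_isProbabilityMeasure (weightMeasure (observationWeight F π Mstar))
  have hα : (Set.Icc (-α) α).Nonempty := ⟨_, entry_mem_Icc_of_linfNorm_le hMstar kl.1 kl.2⟩
  have : Nonempty (Fin n → (Fin d1 × Fin d2) × Bool) := ⟨fun _ ↦ (kl, b)⟩
  let M (x : Fin n → (Fin d1 × Fin d2) × Bool) := Mhat (Prod.fst ∘ x) (Prod.snd ∘ x)
  rw [sum_sum_indicator_sampleWeight hF_Mstar hπ]
  refine (one_sub_le_measureReal_integral_excessLoss_le hF hn hα hMstar hδ (M := M)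
    fun x ↦ hMhat _ _).trans (measureReal_mono fun x hx ↦ ?_)
  have U_nonneg : 0 ≤ U := (hF.pos_of_log_le hα).le
  have β_nonneg : 0 ≤ β := hF.nonneg_of_div_deriv_sq_le hα
  have mean_excessLoss_nonpos : (∑ t, excessLoss F Mstar (M x) (x t)) / n ≤ 0 := by
    rw [sum_excessLoss]
    exact div_nonpos_of_nonpos_of_nonneg (sub_nonpos.2 (hMhat_le _ _)) n.cast_nonneg
  have deviation_le : U * √(2 * Real.log (1 / δ) / n) ≤ U * (32 * √(Real.log (4 / δ) / n)) := by
    rw [mul_div_assoc, Real.sqrt_mul two_pos.le]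
    gcongr
    · exact Real.sqrt_le_iff.2 (by norm_num)
    · norm_num
  calc _ ≤ Real.pi ^ 2 * β * _ :=
        sum_mul_sq_sub_le_integral_excessLoss hF hπ hMstar (hMhat _ _).1
    _ ≤ Real.pi ^ 2 * β * (32 * (L * R * √((d1 + d2) / n) + U * √(Real.log (4 / δ) / n))) := by
        gcongr
        linarith [hx x]
    _ = _ := by ring

end GeneralizationBound

/-- upper bound for the max-norm constrained maximum likelihood estimator of
1-bit matrix completion under a general sampling distribution. There is an absolute
constant `C > 0` such that, under Condition U, any minimizer `M̂` of the negative
log-likelihood over `K_max(α, R)` satisfies, with probability at least `1 − δ`,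
`‖M̂ − M*‖_Π² ≤ C β_α { L_α R √(d/n) + U_α √(log(4/δ)/n) }`. -/
theorem maxNorm_MLE_upper_bound :
    ∃ C : ℝ, 0 < C ∧
      ∀ (d1 d2 n : ℕ) (α R : ℝ) (F : ℝ → ℝ) (π : Fin d1 → Fin d2 → ℝ)
        (Mstar : Matrix (Fin d1) (Fin d2) ℝ) (Lα βα Uα δ : ℝ)
        (Mhat : (Fin n → Fin d1 × Fin d2) → (Fin n → Bool) →
          Matrix (Fin d1) (Fin d2) ℝ),
        1 ≤ d1 → 1 ≤ d2 → 2 < n → n ≤ d1 * d2 → 0 < α → 0 < R →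
        Differentiable ℝ F → (∀ x, 0 < F x ∧ F x < 1) →
        (∀ x ∈ Set.Icc (-α) α, deriv F x ≠ 0) →
        IsLUB ((fun x => |deriv F x| / (F x * (1 - F x))) '' Set.Icc (-α) α) Lα →
        IsLUB ((fun x => F x * (1 - F x) / (deriv F x) ^ 2) '' Set.Icc (-α) α) βα →
        IsLUB ((fun x => Real.log (1 / (F x * (1 - F x)))) '' Set.Icc (-α) α) Uα →
        linfNorm Mstar ≤ α → maxNorm Mstar ≤ R →
        (∀ k l, 0 ≤ π k l) → (∑ k, ∑ l, π k l = 1) →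
        0 < δ →
        (∀ (S : Fin n → Fin d1 × Fin d2) (y : Fin n → Bool),
          (linfNorm (Mhat S y) ≤ α ∧ maxNorm (Mhat S y) ≤ R) ∧
          ∀ M : Matrix (Fin d1) (Fin d2) ℝ, linfNorm M ≤ α → maxNorm M ≤ R →
            negLogLik F S y (Mhat S y) ≤ negLogLik F S y M) →
        1 - δ ≤
          ∑ S : Fin n → Fin d1 × Fin d2, ∑ y : Fin n → Bool,
            Set.indicator
              { p : (Fin n → Fin d1 × Fin d2) × (Fin n → Bool) |
                ∑ k, ∑ l, π k l * (Mhat p.1 p.2 k l - Mstar k l) ^ 2 ≤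
                  C * βα * (Lα * R * Real.sqrt ((d1 + d2 : ℝ) / n) +
                    Uα * Real.sqrt (Real.log (4 / δ) / n)) }
              (fun p => sampleWeight F π Mstar p.1 p.2) (S, y) := by
  refine ⟨32 * Real.pi ^ 2, by positivity, ?_⟩
  intro d1 d2 n α R F π Mstar Lα βα Uα δ Mhat _ _ hn _ _ _ hF hF01 hF' hL hβ hU hMstar hMstarR hπ
    hπ_sum hδ hMhat
  have conditionU : ConditionU F (Set.Icc (-α) α) Lα βα Uα :=
    ⟨fun x _ ↦ hF x, fun x _ ↦ hF01 x, hF', fun x hx ↦ hL.1 ⟨x, hx, rfl⟩,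
      fun x hx ↦ hβ.1 ⟨x, hx, rfl⟩, fun x hx ↦ hU.1 ⟨x, hx, rfl⟩⟩
  exact maxNorm_MLE_upper_bound_general conditionU (by lia) hMstar hπ hπ_sum hδ
    (fun S y ↦ (hMhat S y).1) fun S y ↦ (hMhat S y).2 Mstar hMstar hMstarR
end
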